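/- arXiv:1803.04568 — 2 statements merged into one kernel-verified Lean document; each statement's English description precedes it below -/
import Mathlib

section
/- There exists a function f of class C¹ (in particular Lipschitz) on ℝ² that vanishes outside the square [-1,1]² such that the repeated distributional derivatives ∂_x² f and ∂_y² f belong to L¹(ℝ²), but the mixed distributional derivative ∂_x∂_y f is not (represented by a function) in L¹(ℝ²). -/
open MeasureTheory Real

noncomputable section

/-- First partial derivative (with respect to the first coordinate) on `ℝ²`. -/
def pd1 (f : ℝ × ℝ → ℝ) (p : ℝ × ℝ) : ℝ := fderiv ℝ f p (1, 0)

/-- Second partial derivative (with respect to the second coordinate) on `ℝ²`. -/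
def pd2 (f : ℝ × ℝ → ℝ) (p : ℝ × ℝ) : ℝ := fderiv ℝ f p (0, 1)

/-- Test functions: smooth compactly supported functions on `ℝ²`. -/
def IsTest (φ : ℝ × ℝ → ℝ) : Prop := ContDiff ℝ (⊤ : ℕ∞) φ ∧ HasCompactSupport φ
/-- The square. -/
def Sq : Set (ℝ × ℝ) := Set.Icc ((-1 : ℝ), (-1 : ℝ)) (1, 1)

/-- Smooth functions vanishing off the square. -/
def InT (u : ℝ × ℝ → ℝ) : Prop := ContDiff ℝ (⊤ : ℕ∞) u ∧ ∀ p, p ∉ Sq → u p = 0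

theorem Sq_compact : IsCompact Sq := isCompact_Icc

theorem Sq_vol : volume.real Sq = 4 := by
  unfold Sq
  rw [← Set.Icc_prod_Icc, Measure.volume_eq_prod, measureReal_prod_prod]
  simp
  norm_num

theorem support_in {u : ℝ × ℝ → ℝ} (h : ∀ p, p ∉ Sq → u p = 0) : HasCompactSupport u :=
  HasCompactSupport.intro Sq_compact h

theorem int_of {u : ℝ × ℝ → ℝ} (hc : Continuous u) (h : ∀ p, p ∉ Sq → u p = 0) : Integrable u :=
  hc.integrable_of_hasCompactSupport (support_in h)

theorem InT.cont {u : ℝ × ℝ → ℝ} (h : InT u) : Continuous u := h.1.continuous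
theorem InT.integrable {u : ℝ × ℝ → ℝ} (h : InT u) : Integrable u := int_of h.cont h.2
theorem InT.cs {u : ℝ × ℝ → ℝ} (h : InT u) : HasCompactSupport u := support_in h.2
theorem InT.isTest {u : ℝ × ℝ → ℝ} (h : InT u) : IsTest u := ⟨h.1, h.cs⟩
theorem InT.diff {u : ℝ × ℝ → ℝ} (h : InT u) : Differentiable ℝ u :=
  h.1.differentiable (by simp)

theorem InT.bdd {u : ℝ × ℝ → ℝ} (h : InT u) : ∃ C, 0 ≤ C ∧ ∀ x, |u x| ≤ C := by
  obtain ⟨C, hC⟩ := h.cs.exists_bound_of_continuous h.cont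
  exact ⟨C, (norm_nonneg _).trans (hC 0), hC⟩

theorem fd_contDiff {u : ℝ × ℝ → ℝ} (h : ContDiff ℝ (⊤ : ℕ∞) u) (v : ℝ × ℝ) :
    ContDiff ℝ (⊤ : ℕ∞) (fun x => fderiv ℝ u x v) :=
  (h.fderiv_right (m := (⊤ : ℕ∞)) (by simp)).clm_apply contDiff_const

theorem InT.fd {u : ℝ × ℝ → ℝ} (h : InT u) (v : ℝ × ℝ) : InT (fun x => fderiv ℝ u x v) := by
  refine ⟨fd_contDiff h.1 v, fun p hp => ?_⟩
  have : u =ᶠ[nhds p] fun _ => 0 := by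
    filter_upwards [Sq_compact.isClosed.isOpen_compl.mem_nhds hp] with q hq using h.2 q hq
  simp [this.fderiv_eq]

theorem InT.pd1 {u : ℝ × ℝ → ℝ} (h : InT u) : InT (pd1 u) := h.fd _
theorem InT.pd2 {u : ℝ × ℝ → ℝ} (h : InT u) : InT (pd2 u) := h.fd _

theorem InT.add {u v : ℝ × ℝ → ℝ} (h : InT u) (h' : InT v) : InT (fun x => u x + v x) :=
  ⟨h.1.add h'.1, fun p hp => by simp [h.2 p hp, h'.2 p hp]⟩

theorem InT.mul {u v : ℝ × ℝ → ℝ} (h : InT u) (h' : ContDiff ℝ (⊤ : ℕ∞) v) :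
    InT (fun x => u x * v x) :=
  ⟨h.1.mul h', fun p hp => by simp [h.2 p hp]⟩

theorem InT.zero : InT (fun _ => 0) := ⟨contDiff_const, fun _ _ => rfl⟩

theorem int_le {g : ℝ × ℝ → ℝ} {C : ℝ} (hb : ∀ x, |g x| ≤ C)
    (h : ∀ p, p ∉ Sq → g p = 0) : ∫ x, |g x| ≤ 4 * C := by
  rw [← setIntegral_eq_integral_of_forall_compl_eq_zero (s := Sq)
    (fun x hx => by rw [h x hx, abs_zero])]
  have h1 := norm_setIntegral_le_of_norm_le_const (f := fun x => |g x|) (C := C) (μ := volume)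
    (Sq_compact.measure_lt_top) (fun x _ => by simpa using hb x)
  rw [Sq_vol, mul_comm] at h1
  exact (le_abs_self _).trans h1

/-- Integration by parts, twice. -/
theorem ibp1 {u φ : ℝ × ℝ → ℝ} (hu : InT u) (hφ : ContDiff ℝ (⊤ : ℕ∞) φ) (v : ℝ × ℝ) :
    ∫ x, u x * fderiv ℝ φ x v = - ∫ x, fderiv ℝ u x v * φ x := by
  apply integral_mul_fderiv_eq_neg_fderiv_mul_of_integrable
  · exact ((hu.fd v).mul hφ).integrable
  · exact (hu.mul (fd_contDiff hφ v)).integrable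
  · exact (hu.mul hφ).integrable
  · exact fun x _ => hu.diff x
  · exact fun x _ => hφ.differentiable (by simp) x

theorem ibp2 {u φ : ℝ × ℝ → ℝ} (hu : InT u) (hφ : ContDiff ℝ (⊤ : ℕ∞) φ) (v w : ℝ × ℝ) :
    ∫ x, u x * fderiv ℝ (fun y => fderiv ℝ φ y v) x w =
      ∫ x, fderiv ℝ (fun y => fderiv ℝ u y w) x v * φ x := by
  rw [ibp1 hu (fd_contDiff hφ v) w, ibp1 (hu.fd w) hφ v, neg_neg]

/-- Primitive of periodic mean-zero function. -/
theorem prim_exists {χ : ℝ → ℝ} (hχ : ContDiff ℝ (⊤ : ℕ∞) χ) (hp : Function.Periodic χ 1)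
    (h0 : ∫ t in (0:ℝ)..1, χ t = 0) :
    ∃ ψ : ℝ → ℝ, ContDiff ℝ (⊤ : ℕ∞) ψ ∧ Function.Periodic ψ 1 ∧
      (∫ t in (0:ℝ)..1, ψ t = 0) ∧ ∀ t, HasDerivAt ψ (χ t) t := by
  have hc := hχ.continuous
  have hii : ∀ a b, IntervalIntegrable χ volume a b := fun a b => hc.intervalIntegrable a b
  set F : ℝ → ℝ := fun t => ∫ s in (0:ℝ)..t, χ s with hF
  have hd : ∀ t, HasDerivAt F (χ t) t := fun t =>
    intervalIntegral.integral_hasDerivAt_right (hii _ _)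
      (hc.stronglyMeasurableAtFilter _ _) hc.continuousAt
  have hFp : Function.Periodic F 1 := by
    intro t
    have := hp.intervalIntegral_add_eq t 0
    simp only [hF]
    rw [← intervalIntegral.integral_add_adjacent_intervals (hii 0 t) (hii t (t+1)), this]
    simp [h0]
  have hFc : Continuous F := continuous_iff_continuousAt.2 fun t => (hd t).continuousAt
  have hd2 : ∀ t, HasDerivAt (fun t => F t - ∫ s in (0:ℝ)..1, F s) (χ t) t :=
    fun t => (hd t).sub_const _
  refine ⟨fun t => F t - ∫ s in (0:ℝ)..1, F s, ?_, ?_, ?_, hd2⟩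
  · rw [contDiff_infty_iff_deriv]
    refine ⟨fun t => (hd2 t).differentiableAt, ?_⟩
    rw [show deriv (fun t => F t - ∫ s in (0:ℝ)..1, F s) = χ from funext fun t => (hd2 t).deriv]
    exact hχ
  · intro t; simp only [hFp t]
  · rw [intervalIntegral.integral_sub (hFc.intervalIntegrable _ _) (by simp)]; simp

theorem per_bdd {χ : ℝ → ℝ} (hχ : Continuous χ) (hp : Function.Periodic χ 1) :
    ∃ C, 0 ≤ C ∧ ∀ t, |χ t| ≤ C := by
  obtain ⟨C, hC⟩ := (isCompact_Icc (a := (0:ℝ)) (b := 1)).exists_bound_of_continuousOn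
    hχ.continuousOn
  refine ⟨C, (norm_nonneg _).trans (hC 0 (by simp)), fun t => ?_⟩
  obtain ⟨y, hy, h⟩ := hp.exists_mem_Ico₀ (by norm_num) t
  rw [h]
  exact hC y ⟨hy.1, hy.2.le⟩

/-- The oscillation profile. -/
theorem profile : ∃ (η κ ψ ψ' : ℝ → ℝ) (c M : ℝ), 0 < c ∧ 0 ≤ M ∧
    ContDiff ℝ (⊤ : ℕ∞) η ∧ ContDiff ℝ (⊤ : ℕ∞) ψ ∧ ContDiff ℝ (⊤ : ℕ∞) ψ' ∧ Continuous κ ∧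
    Function.Periodic η 1 ∧ (∀ t, 0 ≤ η t) ∧ (∀ t, 0 ≤ κ t) ∧ (∀ t, κ t ≤ 1) ∧
    (∀ t, η t = 0 ∨ κ t = 0) ∧ (∫ t in (0:ℝ)..1, η t = 1) ∧ (∫ t in (0:ℝ)..1, κ t = c) ∧
    (∀ t, HasDerivAt ψ (ψ' t) t) ∧ (∀ t, HasDerivAt ψ' (η t - 1) t) ∧
    (∀ t, |ψ t| ≤ M) ∧ (∀ t, |ψ' t| ≤ M) ∧ (∀ t, η t ≤ M) := by
  set η₀ : ℝ → ℝ := fun t => Real.smoothTransition (Real.cos (2 * π * t)) with hη₀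
  set κ : ℝ → ℝ := fun t => Real.smoothTransition (-Real.cos (2 * π * t)) with hκ
  have hη₀s : ContDiff ℝ (⊤ : ℕ∞) η₀ :=
    Real.smoothTransition.contDiff.comp (Real.contDiff_cos.comp (contDiff_const.mul contDiff_id))
  have hκs : Continuous κ :=
    Real.smoothTransition.continuous.comp (by fun_prop)
  have hη₀p : Function.Periodic η₀ 1 := by
    intro t; simp only [hη₀, mul_add, mul_one, Real.cos_add_two_pi]
  have h1 : 0 < ∫ t in (0:ℝ)..1, η₀ t := by
    apply intervalIntegral.integral_pos one_pos hη₀s.continuous.continuousOn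
    · exact fun x _ => Real.smoothTransition.nonneg _
    · exact ⟨0, by simp, by simp [hη₀]⟩
  have h2 : 0 < ∫ t in (0:ℝ)..1, κ t := by
    apply intervalIntegral.integral_pos one_pos hκs.continuousOn
    · exact fun x _ => Real.smoothTransition.nonneg _
    · refine ⟨1/2, by norm_num, ?_⟩
      simp only [hκ]
      rw [show 2 * π * (1/2) = π by ring]; simp
  set m := ∫ t in (0:ℝ)..1, η₀ t with hm
  have hηs : ContDiff ℝ (⊤ : ℕ∞) (fun t => m⁻¹ * η₀ t) := contDiff_const.mul hη₀s
  have hηp : Function.Periodic (fun t => m⁻¹ * η₀ t) 1 := fun t => by simp only [hη₀p t]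
  have hint : ∫ t in (0:ℝ)..1, m⁻¹ * η₀ t = 1 := by
    rw [intervalIntegral.integral_const_mul, ← hm]; field_simp
  obtain ⟨ψ', s1, p1, i1, d1⟩ := prim_exists (χ := fun t => m⁻¹ * η₀ t - 1)
    (hηs.sub contDiff_const) (fun t => by simp only [hη₀p t])
    (by rw [intervalIntegral.integral_sub (hηs.continuous.intervalIntegrable _ _) (by simp), hint]
        simp)
  obtain ⟨ψ, s2, p2, i2, d2⟩ := prim_exists s1 p1 i1
  obtain ⟨A, hA, hA'⟩ := per_bdd s1.continuous p1
  obtain ⟨B, hB, hB'⟩ := per_bdd s2.continuous p2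
  obtain ⟨C, hC, hC'⟩ := per_bdd hηs.continuous hηp
  refine ⟨fun t => m⁻¹ * η₀ t, κ, ψ, ψ', ∫ t in (0:ℝ)..1, κ t, A + B + C, h2, by positivity,
    hηs, s2, s1, hκs, hηp, ?_, fun t => Real.smoothTransition.nonneg _,
    fun t => Real.smoothTransition.le_one _, ?_, hint, rfl, d2, d1, ?_, ?_, ?_⟩
  · exact fun t => mul_nonneg (inv_nonneg.2 h1.le) (Real.smoothTransition.nonneg _)
  · intro t
    rcases le_total (Real.cos (2 * π * t)) 0 with h | h
    · left; simp [hη₀, Real.smoothTransition.zero_of_nonpos h]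
    · right; exact Real.smoothTransition.zero_of_nonpos (by linarith)
  · intro t; linarith [hB' t]
  · intro t; linarith [hA' t]
  · intro t; linarith [hC' t, le_abs_self (m⁻¹ * η₀ t)]

/-- Averaging of fast oscillations. -/
theorem avg {G : ℝ × ℝ → ℝ → ℝ} (hc : Continuous (Function.uncurry G))
    (hper : ∀ x, Function.Periodic (G x) 1) (hv : ∀ x, x ∉ Sq → ∀ t, G x t = 0)
    {L : ℝ} (hL : 0 ≤ L) (hlip : ∀ x y t, |G x t - G y t| ≤ L * ‖x - y‖)
    {N σ : ℝ} (hN : 1 ≤ N) :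
    |(∫ x : ℝ × ℝ, G x (N * (x.1 + σ * x.2))) - ∫ x : ℝ × ℝ, ∫ t in (0:ℝ)..1, G x t|
      ≤ 16 * L / N := by
  have hN0 : 0 < N := by linarith
  set f : ℝ × ℝ → ℝ → ℝ := fun x t => G x (N * (x.1 + σ * x.2) + t) with hf
  have hfc : Continuous (Function.uncurry f) := by
    have : Function.uncurry f = fun z : (ℝ × ℝ) × ℝ =>
      Function.uncurry G (z.1, N * (z.1.1 + σ * z.1.2) + z.2) := by
      ext z; rfl
    rw [this]
    exact hc.comp (by fun_prop)
  have hfv : ∀ x, x ∉ Sq → ∀ t, f x t = 0 := fun x hx t => hv x hx _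
  have hfi : ∀ t, Integrable (fun x => f x t) := fun t =>
    int_of (by exact hfc.comp (by fun_prop : Continuous fun x : ℝ × ℝ => (x, t)))
      fun x hx => hfv x hx t
  have e1 : ∫ x : ℝ × ℝ, ∫ t in (0:ℝ)..1, G x t = ∫ t in (0:ℝ)..1, ∫ x : ℝ × ℝ, f x t := by
    have : ∀ x : ℝ × ℝ, ∫ t in (0:ℝ)..1, G x t = ∫ t in (0:ℝ)..1, f x t := by
      intro x
      have h := (hper x).intervalIntegral_add_eq 0 (N * (x.1 + σ * x.2))
      simp only [zero_add] at h
      rw [h]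
      simp only [hf]
      rw [intervalIntegral.integral_comp_add_left (fun s => G x s)]
      simp
    simp_rw [this]
    rw [← setIntegral_eq_integral_of_forall_compl_eq_zero (s := Sq)
      (fun x hx => by simp [hfv x hx])]
    have : ∀ t, ∫ x : ℝ × ℝ, f x t = ∫ x in Sq, f x t := fun t =>
      (setIntegral_eq_integral_of_forall_compl_eq_zero (s := Sq)
      (fun x hx => hfv x hx t)).symm
    simp_rw [this, intervalIntegral.integral_of_le zero_le_one]
    apply integral_integral_swap
    rw [Measure.prod_restrict]
    exact (hfc.continuousOn.integrableOn_compact (Sq_compact.prod isCompact_Icc)).mono_set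
      (Set.prod_mono le_rfl Set.Ioc_subset_Icc_self)
  have e2 : Continuous fun t => ∫ x : ℝ × ℝ, f x t := by
    have : ∀ t, ∫ x : ℝ × ℝ, f x t = ∫ x in Sq, f x t := fun t =>
      (setIntegral_eq_integral_of_forall_compl_eq_zero (s := Sq)
      (fun x hx => hfv x hx t)).symm
    simp_rw [this]
    exact continuous_parametric_integral_of_continuous
      (f := fun t x => f x t) (by exact hfc.comp continuous_swap) Sq_compact
  set A := ∫ x : ℝ × ℝ, G x (N * (x.1 + σ * x.2)) with hA
  have e3 : ∀ t ∈ Set.uIoc (0:ℝ) 1, ‖A - ∫ x : ℝ × ℝ, f x t‖ ≤ 16 * L / N := by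
    intro t ht
    rw [Set.uIoc_of_le zero_le_one] at ht
    set h : ℝ × ℝ := (t / N, 0) with hh
    have hhn : ‖h‖ ≤ 1 / N := by
      rw [hh, Prod.norm_def]
      simp only [norm_zero, Real.norm_eq_abs]
      rw [abs_of_nonneg (div_nonneg ht.1.le hN0.le)]
      refine max_le ?_ (by positivity)
      gcongr; exact ht.2
    have hhn1 : ‖h‖ ≤ 1 := hhn.trans (by rw [div_le_one hN0]; exact hN)
    have sh : A = ∫ x : ℝ × ℝ, G (x + h) (N * (x.1 + σ * x.2) + t) := by
      rw [hA, ← integral_add_right_eq_self _ h]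
      congr 1; ext x
      congr 1
      simp [hh]; field_simp; ring
    have i0 : Integrable (fun x : ℝ × ℝ => G x (N * (x.1 + σ * x.2))) :=
      int_of (by exact hc.comp (by fun_prop :
        Continuous fun x : ℝ × ℝ => (x, N * (x.1 + σ * x.2)))) fun x hx => hv x hx _
    have i1 : Integrable (fun x : ℝ × ℝ => G (x + h) (N * (x.1 + σ * x.2) + t)) := by
      have := i0.comp_add_right h
      refine this.congr (Filter.Eventually.of_forall fun x => ?_)
      show G _ _ = G _ _
      congr 1
      simp [hh]; field_simp; ring
    rw [sh, ← integral_sub i1 (hfi t)]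
    set B : Set (ℝ × ℝ) := Set.Icc ((-2 : ℝ), (-2 : ℝ)) (2, 2) with hB
    have hBv : volume.real B = 16 := by
      rw [hB, ← Set.Icc_prod_Icc, Measure.volume_eq_prod, measureReal_prod_prod]
      simp
      norm_num
    have hz : ∀ x, x ∉ B → G (x + h) (N * (x.1 + σ * x.2) + t) - f x t = 0 := by
      intro x hx
      have a1 := (abs_le.1 ((norm_fst_le h).trans hhn1))
      have a2 := (abs_le.1 ((norm_snd_le h).trans hhn1))
      have h1 : x ∉ Sq := by
        intro hx'
        apply hx
        simp only [Sq, hB, Set.mem_Icc, Prod.le_def] at hx' ⊢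
        refine ⟨⟨?_, ?_⟩, ?_, ?_⟩ <;> linarith [hx'.1.1, hx'.1.2, hx'.2.1, hx'.2.2]
      have h2 : x + h ∉ Sq := by
        intro hx'
        apply hx
        simp only [Sq, hB, Set.mem_Icc, Prod.le_def, Prod.fst_add, Prod.snd_add] at hx' ⊢
        refine ⟨⟨?_, ?_⟩, ?_, ?_⟩ <;>
          linarith [hx'.1.1, hx'.1.2, hx'.2.1, hx'.2.2, a1.1, a1.2, a2.1, a2.2]
      rw [hv _ h2, hfv _ h1, sub_zero]
    rw [← setIntegral_eq_integral_of_forall_compl_eq_zero (s := B) hz]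
    refine (norm_setIntegral_le_of_norm_le_const (C := L * (1 / N))
      (isCompact_Icc.measure_lt_top) (fun x _ => ?_)).trans ?_
    · refine (hlip _ _ _).trans ?_
      rw [add_sub_cancel_left]
      gcongr
    · rw [hBv]; apply le_of_eq; ring
  have e4 := intervalIntegral.norm_integral_le_of_norm_le_const e3
  rw [intervalIntegral.integral_sub (by simp) (e2.intervalIntegrable _ _)] at e4
  rw [e1]
  simpa using e4

theorem osc_fd {q : ℝ × ℝ → ℝ} {χ χ' : ℝ → ℝ} (hq : Differentiable ℝ q)
    (hχ : ∀ t, HasDerivAt χ (χ' t) t) (N σ : ℝ) (x v : ℝ × ℝ) :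
    fderiv ℝ (fun x : ℝ × ℝ => q x * χ (N * (x.1 + σ * x.2))) x v =
      fderiv ℝ q x v * χ (N * (x.1 + σ * x.2)) +
        q x * (χ' (N * (x.1 + σ * x.2)) * (N * (v.1 + σ * v.2))) := by
  have h1 : HasFDerivAt (fun x : ℝ × ℝ => N * (x.1 + σ * x.2))
      (N • (ContinuousLinearMap.fst ℝ ℝ ℝ + σ • ContinuousLinearMap.snd ℝ ℝ ℝ)) x :=
    ((hasFDerivAt_fst (p := x)).add ((hasFDerivAt_snd (p := x)).const_mul σ)).const_mul N
  have h2 := (hχ (N * (x.1 + σ * x.2))).comp_hasFDerivAt x h1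
  have h3 := (hq x).hasFDerivAt.mul h2
  have h4 : HasFDerivAt (fun x : ℝ × ℝ => q x * χ (N * (x.1 + σ * x.2))) _ x := h3
  rw [h4.fderiv]
  simp
  ring

/-- Corrector estimates. -/
theorem osc_step {η ψ ψ' : ℝ → ℝ} {M : ℝ} (hM : 0 ≤ M)
    (sψ : ContDiff ℝ (⊤ : ℕ∞) ψ) (sψ' : ContDiff ℝ (⊤ : ℕ∞) ψ')
    (d : ∀ t, HasDerivAt ψ (ψ' t) t) (d' : ∀ t, HasDerivAt ψ' (η t - 1) t)
    (bψ : ∀ t, |ψ t| ≤ M) (bψ' : ∀ t, |ψ' t| ≤ M) {p : ℝ × ℝ → ℝ} (hp : InT p)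
    (v w : ℝ × ℝ) : ∃ K, 0 ≤ K ∧ ∀ N σ : ℝ, 1 ≤ N → |σ| = 1 → ∀ x : ℝ × ℝ,
      |N⁻¹ ^ 2 * p x * ψ (N * (x.1 + σ * x.2))| ≤ K / N ∧
      |fderiv ℝ (fun x : ℝ × ℝ => N⁻¹ ^ 2 * p x * ψ (N * (x.1 + σ * x.2))) x v| ≤ K / N ∧
      |fderiv ℝ (fun y => fderiv ℝ
        (fun x : ℝ × ℝ => N⁻¹ ^ 2 * p x * ψ (N * (x.1 + σ * x.2))) y v) x w
        - (v.1 + σ * v.2) * (w.1 + σ * w.2) * (p x * (η (N * (x.1 + σ * x.2)) - 1))|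
        ≤ K / N := by
  obtain ⟨P, hP, bP⟩ := hp.bdd
  obtain ⟨Pv, hPv, bPv⟩ := (hp.fd v).bdd
  obtain ⟨Pw, hPw, bPw⟩ := (hp.fd w).bdd
  obtain ⟨Q, hQ, bQ⟩ := ((hp.fd v).fd w).bdd
  set a := |v.1| + |v.2| with ha
  set b := |w.1| + |w.2| with hb
  have ha0 : 0 ≤ a := by positivity
  have hb0 : 0 ≤ b := by positivity
  refine ⟨M * (P + Pv + a * P + Q + b * Pv + a * Pw), by positivity, ?_⟩
  intro N σ hN hσ x
  have hN0 : 0 < N := by linarith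
  have hNi : 0 < N⁻¹ := by positivity
  have hNi1 : N⁻¹ ≤ 1 := inv_le_one_of_one_le₀ hN
  have hlv : |v.1 + σ * v.2| ≤ a := (abs_add_le _ _).trans (by rw [abs_mul, hσ, one_mul])
  have hlw : |w.1 + σ * w.2| ≤ b := (abs_add_le _ _).trans (by rw [abs_mul, hσ, one_mul])
  have hqd : Differentiable ℝ (fun x => N⁻¹ ^ 2 * p x) := hp.diff.const_mul _
  have fd1 : ∀ y, fderiv ℝ (fun x : ℝ × ℝ => N⁻¹ ^ 2 * p x * ψ (N * (x.1 + σ * x.2))) y v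
      = (N⁻¹ ^ 2 * fderiv ℝ p y v) * ψ (N * (y.1 + σ * y.2))
        + (N⁻¹ * (v.1 + σ * v.2) * p y) * ψ' (N * (y.1 + σ * y.2)) := by
    intro y
    rw [osc_fd hqd d, fderiv_const_mul (hp.diff y)]
    simp
    field_simp
  have fd2 : fderiv ℝ (fun y => fderiv ℝ
        (fun x : ℝ × ℝ => N⁻¹ ^ 2 * p x * ψ (N * (x.1 + σ * x.2))) y v) x w
        - (v.1 + σ * v.2) * (w.1 + σ * w.2) * (p x * (η (N * (x.1 + σ * x.2)) - 1))
      = N⁻¹ * (N⁻¹ * fderiv ℝ (fun y => fderiv ℝ p y v) x w * ψ (N * (x.1 + σ * x.2))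
        + (w.1 + σ * w.2) * fderiv ℝ p x v * ψ' (N * (x.1 + σ * x.2))
        + (v.1 + σ * v.2) * fderiv ℝ p x w * ψ' (N * (x.1 + σ * x.2))) := by
    simp_rw [fd1]
    have D1 : Differentiable ℝ (fun y => N⁻¹ ^ 2 * fderiv ℝ p y v) :=
      (hp.fd v).diff.const_mul _
    have D2 : Differentiable ℝ (fun y => N⁻¹ * (v.1 + σ * v.2) * p y) := hp.diff.const_mul _
    have ψd : Differentiable ℝ ψ := fun t => (d t).differentiableAt
    have ψd' : Differentiable ℝ ψ' := fun t => (d' t).differentiableAt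
    have hl : Differentiable ℝ fun y : ℝ × ℝ => N * (y.1 + σ * y.2) := by fun_prop
    have E1 : DifferentiableAt ℝ
      (fun y => N⁻¹ ^ 2 * fderiv ℝ p y v * ψ (N * (y.1 + σ * y.2))) x := (D1.mul (ψd.comp hl)) x
    have E2 : DifferentiableAt ℝ
      (fun y => N⁻¹ * (v.1 + σ * v.2) * p y * ψ' (N * (y.1 + σ * y.2))) x :=
      (D2.mul (ψd'.comp hl)) x
    rw [fderiv_fun_add E1 E2]
    rw [ContinuousLinearMap.add_apply]
    rw [osc_fd D1 d, osc_fd D2 d', fderiv_const_mul ((hp.fd v).diff x),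
      fderiv_const_mul (hp.diff x)]
    simp
    field_simp
    ring
  have key : ∀ r : ℝ, 0 ≤ r → N⁻¹ * r ≤ r := fun r hr => by nlinarith
  set ψx := ψ (N * (x.1 + σ * x.2))
  set ψx' := ψ' (N * (x.1 + σ * x.2))
  have b1 : |ψx| ≤ M := bψ _
  have b2 : |ψx'| ≤ M := bψ' _
  have c1 : |p x * ψx| ≤ P * M := by rw [abs_mul]; gcongr; exact bP x
  have c2 : |fderiv ℝ p x v * ψx| ≤ Pv * M := by rw [abs_mul]; gcongr; exact bPv x
  have c3 : |(v.1 + σ * v.2) * p x * ψx'| ≤ a * P * M := by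
    rw [abs_mul, abs_mul]; gcongr; exact bP x
  have c4 : |fderiv ℝ (fun y => fderiv ℝ p y v) x w * ψx| ≤ Q * M := by
    rw [abs_mul]; gcongr; exact bQ x
  have c5 : |(w.1 + σ * w.2) * fderiv ℝ p x v * ψx'| ≤ b * Pv * M := by
    rw [abs_mul, abs_mul]; gcongr; exact bPv x
  have c6 : |(v.1 + σ * v.2) * fderiv ℝ p x w * ψx'| ≤ a * Pw * M := by
    rw [abs_mul, abs_mul]; gcongr; exact bPw x
  have n1 : 0 ≤ P * M := by positivity
  have n2 : 0 ≤ Pv * M := by positivity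
  have n3 : 0 ≤ a * P * M := by positivity
  have n4 : 0 ≤ Q * M := by positivity
  have n5 : 0 ≤ b * Pv * M := by positivity
  have n6 : 0 ≤ a * Pw * M := by positivity
  rw [div_eq_inv_mul]
  refine ⟨?_, ?_, ?_⟩
  · rw [show N⁻¹ ^ 2 * p x * ψx = N⁻¹ * (N⁻¹ * (p x * ψx)) by ring, abs_mul, abs_of_pos hNi]
    gcongr
    rw [abs_mul, abs_of_pos hNi]
    have := key _ (abs_nonneg (p x * ψx))
    linarith
  · rw [fd1 x, show (N⁻¹ ^ 2 * fderiv ℝ p x v) * ψx + (N⁻¹ * (v.1 + σ * v.2) * p x) * ψx'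
      = N⁻¹ * (N⁻¹ * (fderiv ℝ p x v * ψx) + (v.1 + σ * v.2) * p x * ψx') by ring, abs_mul,
      abs_of_pos hNi]
    gcongr
    refine (abs_add_le _ _).trans ?_
    rw [abs_mul N⁻¹, abs_of_pos hNi]
    have := key _ (abs_nonneg (fderiv ℝ p x v * ψx))
    linarith
  · rw [fd2, abs_mul, abs_of_pos hNi]
    gcongr
    refine (abs_add_three _ _ _).trans ?_
    rw [mul_assoc N⁻¹, abs_mul N⁻¹, abs_of_pos hNi]
    have := key _ (abs_nonneg (fderiv ℝ (fun y => fderiv ℝ p y v) x w * ψx))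
    linarith

/-- Pointwise gain. -/
theorem ptw {η κ : ℝ → ℝ} {c : ℝ} (hη : Continuous η) (hκ : Continuous κ)
    (hη0 : ∀ t, 0 ≤ η t) (hκ0 : ∀ t, 0 ≤ κ t) (hκ1 : ∀ t, κ t ≤ 1)
    (hor : ∀ t, η t = 0 ∨ κ t = 0) (iη : ∫ t in (0:ℝ)..1, η t = 1)
    (iκ : ∫ t in (0:ℝ)..1, κ t = c) (hc : 0 < c) (n : ℕ) (p b : ℝ) (hp : 0 ≤ p) :
    2 * max |b| (c * (n + 1 : ℕ) * p) ≤
      (∫ t in (0:ℝ)..1, max |b + 1 * (p * (η t - 1))| (c * n * (p * η t))) +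
      ∫ t in (0:ℝ)..1, max |b + (-1) * (p * (η t - 1))| (c * n * (p * η t)) := by
  have c1 : Continuous fun t => max |b + 1 * (p * (η t - 1))| (c * n * (p * η t)) := by fun_prop
  have c2 : Continuous fun t => max |b + (-1) * (p * (η t - 1))| (c * n * (p * η t)) := by
    fun_prop
  rw [← intervalIntegral.integral_add (c1.intervalIntegrable _ _) (c2.intervalIntegrable _ _)]
  rw [mul_max_of_nonneg _ _ (by norm_num)]
  apply max_le
  · have : ∫ t in (0:ℝ)..1, 2 * |b| = 2 * |b| := by simp
    rw [← this]
    apply intervalIntegral.integral_mono_on zero_le_one (by simp)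
      ((c1.add c2).intervalIntegrable _ _)
    intro t _
    have h1 := le_max_left |b + 1 * (p * (η t - 1))| (c * n * (p * η t))
    have h2 := le_max_left |b + (-1) * (p * (η t - 1))| (c * n * (p * η t))
    have h3 := abs_add_le (b + 1 * (p * (η t - 1))) (b + (-1) * (p * (η t - 1)))
    have h4 : b + 1 * (p * (η t - 1)) + (b + (-1) * (p * (η t - 1))) = 2 * b := by ring
    rw [h4, abs_mul, abs_two] at h3
    simp only [Pi.add_apply]
    linarith
  · have : ∫ t in (0:ℝ)..1, (2 * c * n * p * η t + 2 * p * κ t)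
        = 2 * (c * (n + 1 : ℕ) * p) := by
      have J1 : IntervalIntegrable (fun t => 2 * c * n * p * η t) volume 0 1 :=
        Continuous.intervalIntegrable (by fun_prop) _ _
      have J2 : IntervalIntegrable (fun t => 2 * p * κ t) volume 0 1 :=
        Continuous.intervalIntegrable (by fun_prop) _ _
      rw [intervalIntegral.integral_add J1 J2, intervalIntegral.integral_const_mul,
        intervalIntegral.integral_const_mul, iη, iκ]
      push_cast; ring
    rw [← this]
    apply intervalIntegral.integral_mono_on zero_le_one
      (Continuous.intervalIntegrable (by fun_prop) _ _) ((c1.add c2).intervalIntegrable _ _)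
    intro t _
    simp only [Pi.add_apply]
    rcases hor t with h | h
    · have h1 := le_max_left |b + 1 * (p * (η t - 1))| (c * n * (p * η t))
      have h2 := le_max_left |b + (-1) * (p * (η t - 1))| (c * n * (p * η t))
      have h3 := neg_le_abs (b + 1 * (p * (η t - 1)))
      have h4 := le_abs_self (b + (-1) * (p * (η t - 1)))
      have h5 : p * κ t ≤ p := mul_le_of_le_one_right hp (hκ1 t)
      rw [h] at h1 h2 h3 h4 ⊢
      linarith
    · have h1 := le_max_right |b + 1 * (p * (η t - 1))| (c * n * (p * η t))
      have h2 := le_max_right |b + (-1) * (p * (η t - 1))| (c * n * (p * η t))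
      rw [h]
      linarith

theorem InT.lip {u : ℝ × ℝ → ℝ} (h : InT u) :
    ∃ L, 0 ≤ L ∧ ∀ x y, |u x - u y| ≤ L * ‖x - y‖ := by
  obtain ⟨C, hC⟩ := h.1.lipschitzWith_of_hasCompactSupport h.cs (by simp)
  refine ⟨C, C.2, fun x y => ?_⟩
  have := hC.dist_le_mul x y
  rwa [dist_eq_norm, dist_eq_norm] at this

/-- Main iteration. -/
theorem claim {η κ ψ ψ' : ℝ → ℝ} {c M : ℝ} (hc : 0 < c) (hM : 0 ≤ M)
    (sη : ContDiff ℝ (⊤ : ℕ∞) η)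
    (sψ : ContDiff ℝ (⊤ : ℕ∞) ψ) (sψ' : ContDiff ℝ (⊤ : ℕ∞) ψ') (hκ : Continuous κ)
    (pη : Function.Periodic η 1)
    (hη0 : ∀ t, 0 ≤ η t) (hκ0 : ∀ t, 0 ≤ κ t) (hκ1 : ∀ t, κ t ≤ 1)
    (hor : ∀ t, η t = 0 ∨ κ t = 0) (iη : ∫ t in (0:ℝ)..1, η t = 1)
    (iκ : ∫ t in (0:ℝ)..1, κ t = c)
    (d : ∀ t, HasDerivAt ψ (ψ' t) t) (d' : ∀ t, HasDerivAt ψ' (η t - 1) t)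
    (bψ : ∀ t, |ψ t| ≤ M) (bψ' : ∀ t, |ψ' t| ≤ M) (bη : ∀ t, η t ≤ M) (n : ℕ) :
    ∀ p b : ℝ × ℝ → ℝ, InT p → (∀ x, 0 ≤ p x) → InT b → ∀ ε : ℝ, 0 < ε →
    ∃ u : ℝ × ℝ → ℝ, InT u ∧ (∀ x, |u x| ≤ ε) ∧ (∀ x, |pd1 u x| ≤ ε) ∧ (∀ x, |pd2 u x| ≤ ε) ∧
      (∫ x, |p x + pd1 (pd1 u) x| ≤ (∫ x, p x) + ε) ∧
      (∫ x, |p x + pd2 (pd2 u) x| ≤ (∫ x, p x) + ε) ∧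
      (∫ x, max |b x| (c * n * p x)) - ε ≤ ∫ x, |b x + pd2 (pd1 u) x| := by
  have ηc := sη.continuous
  induction n with
  | zero =>
    intro p b hp hp0 hb ε hε
    have z1 : pd1 (fun _ => (0:ℝ)) = fun _ => 0 := by ext x; simp [pd1]
    have z2 : pd2 (fun _ => (0:ℝ)) = fun _ => 0 := by ext x; simp [pd2]
    refine ⟨fun _ => 0, InT.zero, ?_⟩
    simp only [z1, z2, abs_zero, add_zero]
    have : ∀ x, |p x| = p x := fun x => abs_of_nonneg (hp0 x)
    simp only [this, CharP.cast_eq_zero, mul_zero, zero_mul]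
    refine ⟨fun _ => hε.le, fun _ => hε.le, fun _ => hε.le, by linarith, by linarith, ?_⟩
    have : ∀ x, max |b x| 0 = |b x| := fun x => max_eq_left (abs_nonneg _)
    simp only [this]; linarith
  | succ n ih =>
    intro p b hp hp0 hb ε hε
    obtain ⟨Lp, hLp, lp⟩ := hp.lip
    obtain ⟨Lb, hLb, lb⟩ := hb.lip
    obtain ⟨K1, hK1, k1⟩ := osc_step hM sψ sψ' d d' bψ bψ' hp (1, 0) (1, 0)
    obtain ⟨K2, hK2, k2⟩ := osc_step hM sψ sψ' d d' bψ bψ' hp (0, 1) (0, 1)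
    obtain ⟨K3, hK3, k3⟩ := osc_step hM sψ sψ' d d' bψ bψ' hp (1, 0) (0, 1)
    set L := Lb + Lp * (M + 1) + c * n * (Lp * M) with hL
    have hL0 : 0 ≤ L := by positivity
    set T := 16 * L + 16 * (Lp * M) + 4 * K1 + 4 * K2 + 4 * K3 with hT
    have hT0 : 0 ≤ T := by positivity
    obtain ⟨N, hN1, hN⟩ : ∃ N : ℝ, 1 ≤ N ∧ T / N ≤ ε / 2 := by
      refine ⟨max 1 (2 * T / ε), le_max_left _ _, ?_⟩
      have h0 : 0 < max 1 (2 * T / ε) := lt_of_lt_of_le one_pos (le_max_left _ _)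
      rw [div_le_iff₀ h0]
      have := le_max_right 1 (2 * T / ε)
      have h2 : ε / 2 * (2 * T / ε) = T := by field_simp
      calc T = ε / 2 * (2 * T / ε) := h2.symm
        _ ≤ _ := by gcongr
    have hN0 : 0 < N := by linarith
    have hsplit : T / N = 16 * L / N + 16 * (Lp * M) / N + 4 * (K1 / N) + 4 * (K2 / N)
      + 4 * (K3 / N) := by rw [hT]; ring
    have q1 : 0 ≤ 16 * L / N := by positivity
    have q2 : 0 ≤ 16 * (Lp * M) / N := by positivity
    have q3 : 0 ≤ K1 / N := by positivity
    have q4 : 0 ≤ K2 / N := by positivity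
    have q5 : 0 ≤ K3 / N := by positivity
    -- averaging
    set G : ℝ → ℝ × ℝ → ℝ → ℝ := fun σ x t =>
      max |b x + σ * (p x * (η t - 1))| (c * n * (p x * η t)) with hG
    have hpc := hp.cont
    have hbc := hb.cont
    have Gc : ∀ σ, Continuous (Function.uncurry (G σ)) := by
      intro σ
      have : Function.uncurry (G σ) = fun z : (ℝ × ℝ) × ℝ =>
        max |b z.1 + σ * (p z.1 * (η z.2 - 1))| (c * n * (p z.1 * η z.2)) := by ext z; rfl
      rw [this]; fun_prop
    have Gv : ∀ σ x, x ∉ Sq → ∀ t, G σ x t = 0 := by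
      intro σ x hx t
      simp [hG, hp.2 x hx, hb.2 x hx]
    have ηa : ∀ t, |η t| ≤ M := fun t => by rw [abs_of_nonneg (hη0 t)]; exact bη t
    have ηa1 : ∀ t, |η t - 1| ≤ M + 1 := fun t =>
      (abs_sub _ _).trans (by have := ηa t; simp; linarith)
    have Glip : ∀ σ : ℝ, |σ| = 1 → ∀ x y t, |G σ x t - G σ y t| ≤ L * ‖x - y‖ := by
      intro σ hσ x y t
      refine (abs_max_sub_max_le_max _ _ _ _).trans (max_le ?_ ?_)
      · refine (abs_abs_sub_abs_le _ _).trans ?_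
        rw [show b x + σ * (p x * (η t - 1)) - (b y + σ * (p y * (η t - 1)))
          = (b x - b y) + σ * ((p x - p y) * (η t - 1)) by ring]
        refine (abs_add_le _ _).trans ?_
        rw [abs_mul, hσ, one_mul, abs_mul]
        calc _ ≤ Lb * ‖x - y‖ + (Lp * ‖x - y‖) * (M + 1) := by
              gcongr
              · exact lb x y
              · exact lp x y
              · exact ηa1 t
          _ ≤ L * ‖x - y‖ := by
              have : 0 ≤ c * n * (Lp * M) * ‖x - y‖ := by positivity
              rw [hL]; linarith
      · rw [show c * n * (p x * η t) - c * n * (p y * η t) = c * n * ((p x - p y) * η t) by ring,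
          abs_mul (c * n), abs_mul (p x - p y), abs_of_nonneg (by positivity : 0 ≤ c * n)]
        calc _ ≤ c * n * ((Lp * ‖x - y‖) * M) := by
              gcongr
              · exact lp x y
              · exact ηa t
          _ ≤ L * ‖x - y‖ := by
              have : 0 ≤ (Lb + Lp * (M + 1)) * ‖x - y‖ := by positivity
              rw [hL]; linarith
    have av : ∀ σ : ℝ, |σ| = 1 → _ := fun σ hσ =>
      avg (Gc σ) (fun x t => by simp only [hG, pη t]) (Gv σ) hL0 (Glip σ hσ) (σ := σ) hN1
    have avH : ∀ σ : ℝ, |(∫ x : ℝ × ℝ, p x * η (N * (x.1 + σ * x.2))) - ∫ x, p x|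
        ≤ 16 * (Lp * M) / N := by
      intro σ
      have := avg (G := fun x t => p x * η t) (by
        have : (Function.uncurry fun (x : ℝ × ℝ) (t : ℝ) => p x * η t) =
          fun z : (ℝ × ℝ) × ℝ => p z.1 * η z.2 := by ext z; rfl
        rw [this]; fun_prop) (fun x t => by simp only [pη t])
        (fun x hx t => by simp [hp.2 x hx]) (L := Lp * M) (by positivity)
        (fun x y t => by
          rw [← sub_mul, abs_mul]
          calc _ ≤ (Lp * ‖x - y‖) * M := by
                gcongr
                · exact lp x y
                · exact ηa t
            _ = _ := by ring) (σ := σ) hN1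
      simpa only [intervalIntegral.integral_const_mul, iη, mul_one] using this
    have gi : ∀ σ, Integrable fun x => ∫ t in (0:ℝ)..1, G σ x t := by
      intro σ
      refine int_of ?_ fun x hx => by simp [Gv σ x hx]
      exact intervalIntegral.continuous_parametric_intervalIntegral_of_continuous' (Gc σ) 0 1
    have gain : 2 * ∫ x, max |b x| (c * (n + 1 : ℕ) * p x) ≤
        (∫ x, ∫ t in (0:ℝ)..1, G 1 x t) + ∫ x, ∫ t in (0:ℝ)..1, G (-1) x t := by
      rw [← integral_add (gi 1) (gi (-1)), ← integral_const_mul]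
      apply integral_mono _ ((gi 1).add (gi (-1)))
      · intro x
        exact ptw ηc hκ hη0 hκ0 hκ1 hor iη iκ hc n (p x) (b x) (hp0 x)
      · apply Integrable.const_mul
        exact int_of (by fun_prop) fun x hx => by simp [hp.2 x hx, hb.2 x hx]
    obtain ⟨σ, hσ, hgain⟩ : ∃ σ : ℝ, |σ| = 1 ∧
        (∫ x, max |b x| (c * (n + 1 : ℕ) * p x)) - 16 * L / N ≤
          ∫ x : ℝ × ℝ, G σ x (N * (x.1 + σ * x.2)) := by
      have a1 := abs_le.1 (av 1 (by simp))
      have a2 := abs_le.1 (av (-1) (by simp))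
      by_contra! hcon
      have b1 := hcon 1 (by simp)
      have b2 := hcon (-1) (by simp)
      linarith [a1.1, a2.1]
    have hσ2 : σ * σ = 1 := by rw [← abs_mul_abs_self, hσ, one_mul]
    set ℓ : ℝ × ℝ → ℝ := fun x => N * (x.1 + σ * x.2) with hℓ
    have sℓ : ContDiff ℝ (⊤ : ℕ∞) ℓ := by
      rw [hℓ]
      exact contDiff_const.mul (contDiff_fst.add (contDiff_const.mul contDiff_snd))
    set u1 : ℝ × ℝ → ℝ := fun x => N⁻¹ ^ 2 * p x * ψ (N * (x.1 + σ * x.2)) with hu1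
    have tu1 : InT u1 := by
      refine ⟨(contDiff_const.mul hp.1).mul (sψ.comp sℓ), fun x hx => ?_⟩
      simp [hu1, hp.2 x hx]
    set p' : ℝ × ℝ → ℝ := fun x => p x * η (ℓ x) with hp'
    have tp' : InT p' := hp.mul (sη.comp sℓ)
    have tb' : InT (fun x => b x + pd2 (pd1 u1) x) := hb.add tu1.pd1.pd2
    obtain ⟨u2, tu2, A1, A2, A3, A4, A5, A6⟩ := ih p' _ tp'
      (fun x => mul_nonneg (hp0 x) (hη0 _)) tb' (ε / 2) (by positivity)
    have f1 : pd1 (fun x => u1 x + u2 x) = fun x => pd1 u1 x + pd1 u2 x := by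
      ext x; simp only [pd1]; rw [fderiv_fun_add (tu1.diff x) (tu2.diff x)]; rfl
    have f2 : pd2 (fun x => u1 x + u2 x) = fun x => pd2 u1 x + pd2 u2 x := by
      ext x; simp only [pd2]; rw [fderiv_fun_add (tu1.diff x) (tu2.diff x)]; rfl
    have f11 : pd1 (fun x => pd1 u1 x + pd1 u2 x) = fun x => pd1 (pd1 u1) x + pd1 (pd1 u2) x := by
      ext x; rw [pd1, fderiv_fun_add (tu1.pd1.diff x) (tu2.pd1.diff x)]; rfl
    have f22 : pd2 (fun x => pd2 u1 x + pd2 u2 x) = fun x => pd2 (pd2 u1) x + pd2 (pd2 u2) x := by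
      ext x; rw [pd2, fderiv_fun_add (tu1.pd2.diff x) (tu2.pd2.diff x)]; rfl
    have f21 : pd2 (fun x => pd1 u1 x + pd1 u2 x) = fun x => pd2 (pd1 u1) x + pd2 (pd1 u2) x := by
      ext x; rw [pd2, fderiv_fun_add (tu1.pd1.diff x) (tu2.pd1.diff x)]; rfl
    have B1 : ∀ x, |pd1 (pd1 u1) x - (p' x - p x)| ≤ K1 / N := by
      intro x
      have h0 := (k1 N σ hN1 hσ x).2.2
      have h1 : p' x - p x = ((1 : ℝ) + σ * 0) * (1 + σ * 0) *
          (p x * (η (N * (x.1 + σ * x.2)) - 1)) := by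
        simp only [hp', hℓ]; ring
      rw [h1]
      exact h0
    have B2 : ∀ x, |pd2 (pd2 u1) x - (p' x - p x)| ≤ K2 / N := by
      intro x
      have h0 := (k2 N σ hN1 hσ x).2.2
      have h1 : p' x - p x = ((0 : ℝ) + σ * 1) * (0 + σ * 1) *
          (p x * (η (N * (x.1 + σ * x.2)) - 1)) := by
        simp only [hp', hℓ]
        linear_combination (-(p x * (η (N * (x.1 + σ * x.2)) - 1))) * hσ2
      rw [h1]
      exact h0
    have B3 : ∀ x, |pd2 (pd1 u1) x - σ * (p' x - p x)| ≤ K3 / N := by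
      intro x
      have h0 := (k3 N σ hN1 hσ x).2.2
      have h1 : σ * (p' x - p x) = ((1 : ℝ) + σ * 0) * (0 + σ * 1) *
          (p x * (η (N * (x.1 + σ * x.2)) - 1)) := by
        simp only [hp', hℓ]; ring
      rw [h1]
      exact h0
    have vz : ∀ (w : ℝ × ℝ → ℝ) (s : ℝ), InT w → ∀ x, x ∉ Sq → w x - s * (p' x - p x) = 0 := by
      intro w s hw x hx
      simp [hw.2 x hx, tp'.2 x hx, hp.2 x hx]
    have J1 := int_le B1 fun x hx => by simpa using vz _ 1 tu1.pd1.pd1 x hx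
    have J2 := int_le B2 fun x hx => by simpa using vz _ 1 tu1.pd2.pd2 x hx
    have J3 := int_le B3 (vz _ σ tu1.pd1.pd2)
    have H := (abs_le.1 (avH σ)).2
    have H' : ∫ x, p' x ≤ (∫ x, p x) + 16 * (Lp * M) / N := by
      simp only [hp', hℓ]; linarith
    have general : ∀ w1 w2 : ℝ × ℝ → ℝ, InT w1 → InT w2 →
        ∫ x, |p x + (w1 x + w2 x)| ≤ (∫ x, |p' x + w2 x|) + ∫ x, |w1 x - (p' x - p x)| := by
      intro w1 w2 h1 h2
      have I1 : Integrable fun x => |p' x + w2 x| := (tp'.integrable.add h2.integrable).abs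
      have I2 : Integrable fun x => |w1 x - (p' x - p x)| :=
        (h1.integrable.sub (tp'.integrable.sub hp.integrable)).abs
      rw [← integral_add I1 I2]
      refine integral_mono (hp.integrable.add (h1.integrable.add h2.integrable)).abs
        (I1.add I2) fun x => ?_
      have := abs_add_le (p' x + w2 x) (w1 x - (p' x - p x))
      rwa [show p' x + w2 x + (w1 x - (p' x - p x)) = p x + (w1 x + w2 x) by ring] at this
    refine ⟨fun x => u1 x + u2 x, tu1.add tu2, ?_, ?_, ?_, ?_, ?_, ?_⟩
    · intro x
      have := (k1 N σ hN1 hσ x).1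
      have := abs_add_le (u1 x) (u2 x)
      linarith [A1 x]
    · intro x
      rw [f1]
      have h1 : |pd1 u1 x| ≤ K1 / N := (k1 N σ hN1 hσ x).2.1
      have := abs_add_le (pd1 u1 x) (pd1 u2 x)
      linarith [A2 x]
    · intro x
      rw [f2]
      have h1 : |pd2 u1 x| ≤ K2 / N := (k2 N σ hN1 hσ x).2.1
      have := abs_add_le (pd2 u1 x) (pd2 u2 x)
      linarith [A3 x]
    · rw [f1, f11]
      have := general _ _ tu1.pd1.pd1 tu2.pd1.pd1
      linarith
    · rw [f2, f22]
      have := general _ _ tu1.pd2.pd2 tu2.pd2.pd2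
      linarith
    · rw [f1, f21]
      have I1 : Integrable fun x => max |b x + pd2 (pd1 u1) x| (c * n * p' x) := by
        have h1 := tb'.cont
        have h2 := tp'.cont
        exact int_of (by fun_prop) fun x hx => by simp [tb'.2 x hx, tp'.2 x hx]
      have I2 : Integrable fun x => |pd2 (pd1 u1) x - σ * (p' x - p x)| :=
        (tu1.pd1.pd2.integrable.sub ((tp'.integrable.sub hp.integrable).const_mul σ)).abs
      have I3 : Integrable fun x : ℝ × ℝ => G σ x (N * (x.1 + σ * x.2)) :=
        int_of (by exact (Gc σ).comp (by fun_prop :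
          Continuous fun x : ℝ × ℝ => (x, N * (x.1 + σ * x.2)))) fun x hx => Gv σ x hx _
      have step : ∫ x : ℝ × ℝ, G σ x (N * (x.1 + σ * x.2)) ≤
          (∫ x, max |b x + pd2 (pd1 u1) x| (c * n * p' x)) +
            ∫ x, |pd2 (pd1 u1) x - σ * (p' x - p x)| := by
        rw [← integral_add I1 I2]
        refine integral_mono I3 (I1.add I2) fun x => ?_
        simp only [hG]
        apply max_le
        · have h1 := abs_sub (b x + pd2 (pd1 u1) x) (pd2 (pd1 u1) x - σ * (p' x - p x))
          have h2 := le_max_left |b x + pd2 (pd1 u1) x| (c * n * p' x)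
          have h3 : b x + pd2 (pd1 u1) x - (pd2 (pd1 u1) x - σ * (p' x - p x))
            = b x + σ * (p x * (η (N * (x.1 + σ * x.2)) - 1)) := by
            simp only [hp', hℓ]; ring
          rw [h3] at h1
          linarith
        · have h2 := le_max_right |b x + pd2 (pd1 u1) x| (c * n * p' x)
          have h3 := abs_nonneg (pd2 (pd1 u1) x - σ * (p' x - p x))
          simp only [hp', hℓ] at *
          linarith
      have e : ∀ x, b x + (pd2 (pd1 u1) x + pd2 (pd1 u2) x)
        = b x + pd2 (pd1 u1) x + pd2 (pd1 u2) x := fun x => by ring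
      simp only [e]
      linarith

/-- A nonnegative bump. -/
theorem bump : ∃ p : ℝ × ℝ → ℝ, InT p ∧ (∀ x, 0 ≤ p x) ∧ 0 < ∫ x, p x := by
  set p : ℝ × ℝ → ℝ := fun x =>
    Real.smoothTransition (1 - x.1 ^ 2) * Real.smoothTransition (1 - x.2 ^ 2) with hp
  have h0 : ∀ x, 0 ≤ p x := fun x =>
    mul_nonneg (Real.smoothTransition.nonneg _) (Real.smoothTransition.nonneg _)
  have hT : InT p := by
    constructor
    · exact (Real.smoothTransition.contDiff.comp (contDiff_const.sub (contDiff_fst.pow 2))).mul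
        (Real.smoothTransition.contDiff.comp (contDiff_const.sub (contDiff_snd.pow 2)))
    · intro x hx
      by_contra hne
      simp only [hp, mul_eq_zero, not_or] at hne
      have a1 : 0 < 1 - x.1 ^ 2 := by
        by_contra h
        exact hne.1 (Real.smoothTransition.zero_of_nonpos (not_lt.1 h))
      have a2 : 0 < 1 - x.2 ^ 2 := by
        by_contra h
        exact hne.2 (Real.smoothTransition.zero_of_nonpos (not_lt.1 h))
      apply hx
      refine ⟨⟨?_, ?_⟩, ⟨?_, ?_⟩⟩ <;> simp <;> nlinarith
  refine ⟨p, hT, h0, ?_⟩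
  refine hT.cont.integral_pos_of_hasCompactSupport_nonneg_nonzero hT.cs h0 (x := (0, 0)) ?_
  simp [hp]

/-- Building blocks. -/
theorem blocks : ∃ (u φ : ℕ → ℝ × ℝ → ℝ) (C : ℝ), 0 ≤ C ∧ (∀ n, InT (u n)) ∧
    (∀ n, InT (φ n)) ∧ (∀ n x, |φ n x| ≤ 1) ∧ (∀ n x, |u n x| ≤ 1) ∧
    (∀ n x, |pd1 (u n) x| ≤ 1) ∧ (∀ n x, |pd2 (u n) x| ≤ 1) ∧
    (∀ n, ∫ x, |pd1 (pd1 (u n)) x| ≤ C) ∧ (∀ n, ∫ x, |pd2 (pd2 (u n)) x| ≤ C) ∧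
    ∀ n : ℕ, (n : ℝ) ≤ ∫ x, u n x * pd1 (pd2 (φ n)) x := by
  obtain ⟨η, κ, ψ, ψ', c, M, hc, hM, e1, e2, e3, e4, e5, e6, e7, e8, e9, e10, e11, e12, e13,
    e14, e15, e16⟩ := profile
  obtain ⟨p, hp, hp0, hpi⟩ := bump
  have key : ∀ n : ℕ, ∃ u φ : ℝ × ℝ → ℝ, InT u ∧ InT φ ∧ (∀ x, |φ x| ≤ 1) ∧ (∀ x, |u x| ≤ 1) ∧
    (∀ x, |pd1 u x| ≤ 1) ∧ (∀ x, |pd2 u x| ≤ 1) ∧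
    (∫ x, |pd1 (pd1 u) x| ≤ 2 * (∫ x, p x) + 1) ∧ (∫ x, |pd2 (pd2 u) x| ≤ 2 * (∫ x, p x) + 1) ∧
    (n : ℝ) ≤ ∫ x, u x * pd1 (pd2 φ) x := by
    intro n
    obtain ⟨k, hk⟩ := exists_nat_gt ((n + 5) / (c * ∫ x, p x))
    rw [div_lt_iff₀ (by positivity)] at hk
    obtain ⟨u, hu, A1, A2, A3, A4, A5, A6⟩ := claim hc hM e1 e2 e3 e4 e5 e6 e7 e8 e9 e10 e11 e12 e13
      e14 e15 e16 k p (fun _ => 0) hp hp0 InT.zero 1 one_pos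
    have tri : ∀ w : ℝ × ℝ → ℝ, InT w → ∫ x, |p x + w x| ≤ (∫ x, p x) + 1 →
        ∫ x, |w x| ≤ 2 * (∫ x, p x) + 1 := by
      intro w hw h
      have I1 : Integrable fun x => |p x + w x| := (hp.integrable.add hw.integrable).abs
      have : ∫ x, |w x| ≤ (∫ x, |p x + w x|) + ∫ x, p x := by
        rw [← integral_add I1 hp.integrable]
        refine integral_mono hw.integrable.abs (I1.add hp.integrable) fun x => ?_
        have h1 := abs_sub (p x + w x) (p x)
        rw [add_sub_cancel_left, abs_of_nonneg (hp0 x)] at h1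
        exact h1
      linarith
    set w := pd2 (pd1 u) with hw
    have tw : InT w := hu.pd1.pd2
    have pos : ∀ x, 0 < w x ^ 2 + 1 := fun x => by positivity
    have sm : ContDiff ℝ (⊤ : ℕ∞) fun x => (√(w x ^ 2 + 1))⁻¹ :=
      (((tw.1.pow 2).add contDiff_const).sqrt fun x => (pos x).ne').inv
        fun x => (Real.sqrt_pos.2 (pos x)).ne'
    set φ : ℝ × ℝ → ℝ := fun x => w x * (√(w x ^ 2 + 1))⁻¹ with hφ
    have tφ : InT φ := tw.mul sm
    have hs : ∀ x, |w x| ≤ √(w x ^ 2 + 1) := fun x => by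
      rw [← Real.sqrt_sq_eq_abs]; exact Real.sqrt_le_sqrt (by linarith)
    have hs2 : ∀ x, √(w x ^ 2 + 1) ≤ |w x| + 1 := fun x => by
      rw [Real.sqrt_le_left (by positivity)]
      have := sq_abs (w x)
      nlinarith [abs_nonneg (w x)]
    have hφ1 : ∀ x, |φ x| ≤ 1 := fun x => by
      have h0 := Real.sqrt_pos.2 (pos x)
      simp only [hφ]
      rw [abs_mul, abs_of_pos (inv_pos.2 h0), ← div_eq_mul_inv, div_le_one h0]
      exact hs x
    have hφw : ∀ x, |(|w x| - w x * φ x)| ≤ 1 := fun x => by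
      have h0 := Real.sqrt_pos.2 (pos x)
      have : |w x| - w x * φ x = |w x| * (√(w x ^ 2 + 1) - |w x|) / √(w x ^ 2 + 1) := by
        simp only [hφ]
        have := abs_mul_abs_self (w x)
        field_simp
        linear_combination this
      rw [this, abs_le]
      have h1 := hs x
      have h2 := hs2 x
      have h3 := abs_nonneg (w x)
      constructor
      · have : 0 ≤ |w x| * (√(w x ^ 2 + 1) - |w x|) / √(w x ^ 2 + 1) := by
          apply div_nonneg _ h0.le
          apply mul_nonneg h3; linarith
        linarith
      · rw [div_le_one h0]; nlinarith
    have J : ∫ x, |(|w x| - w x * φ x)| ≤ 4 * 1 :=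
      int_le hφw fun x hx => by simp [tw.2 x hx]
    have J2 : (∫ x, |w x|) - ∫ x, w x * φ x ≤ 4 := by
      rw [← integral_sub tw.integrable.abs (tw.mul tφ.1).integrable]
      exact (le_abs_self _).trans ((abs_integral_le_integral_abs).trans (by linarith))
    have E : ∫ x, u x * pd1 (pd2 φ) x = ∫ x, w x * φ x := ibp2 hu tφ.1 (0, 1) (1, 0)
    refine ⟨u, φ, hu, tφ, hφ1, A1, A2, A3, tri _ hu.pd1.pd1 A4, tri _ hu.pd2.pd2 A5, ?_⟩
    rw [E]
    have mx : ∀ x, max |(0:ℝ)| (c * k * p x) = c * k * p x := fun x => by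
      rw [abs_zero]; exact max_eq_right (by have := hp0 x; positivity)
    simp only [mx, zero_add, integral_const_mul] at A6
    linarith
  choose u φ h using key
  refine ⟨u, φ, 2 * (∫ x, p x) + 1, by linarith, fun n => (h n).1, fun n => (h n).2.1,
    fun n => (h n).2.2.1, fun n => (h n).2.2.2.1, fun n => (h n).2.2.2.2.1,
    fun n => (h n).2.2.2.2.2.1, fun n => (h n).2.2.2.2.2.2.1, fun n => (h n).2.2.2.2.2.2.2.1,
    fun n => (h n).2.2.2.2.2.2.2.2⟩

/-- Termwise integration of absolutely convergent series. -/
theorem ser {w : ℕ → ℝ × ℝ → ℝ} (hw : ∀ j, Integrable (w j)) {C : ℝ}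
    (hC : ∀ j, ∫ x, |w j x| ≤ C) {a : ℕ → ℝ} (ha : Summable fun j => |a j|) :
    Integrable (fun x => ∑' j, a j * w j x) ∧ ∀ φ : ℝ × ℝ → ℝ, Continuous φ →
      (∃ K, ∀ x, |φ x| ≤ K) →
      HasSum (fun j => a j * ∫ x, w j x * φ x) (∫ x, (∑' j, a j * w j x) * φ x) := by
  have sm : Summable fun j => ∫ x, ‖a j * w j x‖ := by
    simp only [norm_mul, Real.norm_eq_abs, integral_const_mul]
    refine Summable.of_nonneg_of_le (fun j => ?_) (fun j => ?_) (ha.mul_right C)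
    · exact mul_nonneg (abs_nonneg _) (integral_nonneg fun x => abs_nonneg _)
    · exact mul_le_mul_of_nonneg_left (hC j) (abs_nonneg _)
  have hI : ∀ j, Integrable fun x => a j * w j x := fun j => (hw j).const_mul _
  constructor
  · refine ⟨(AEMeasurable.tsum fun j => (hI j).1.aemeasurable).aestronglyMeasurable, ?_⟩
    have h1 : ∫⁻ x, ‖∑' j, a j * w j x‖ₑ ≤ ∑' j, ∫⁻ x, ‖a j * w j x‖ₑ := by
      rw [← lintegral_tsum fun j => (hI j).1.enorm]
      exact lintegral_mono fun x => enorm_tsum_le_tsum_enorm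
    refine lt_of_le_of_lt h1 ?_
    have h2 : ∀ j, ∫⁻ x, ‖a j * w j x‖ₑ = ENNReal.ofReal (∫ x, ‖a j * w j x‖) := fun j =>
      (ofReal_integral_norm_eq_lintegral_enorm (hI j)).symm
    simp only [h2]
    rw [← ENNReal.ofReal_tsum_of_nonneg (fun j => integral_nonneg fun x => norm_nonneg _) sm]
    exact ENNReal.ofReal_lt_top
  · rintro φ hφ ⟨K, hK⟩
    have hI2 : ∀ j, Integrable fun x => a j * w j x * φ x := fun j =>
      (hI j).mul_bdd (c := K) hφ.aestronglyMeasurable (ae_of_all _ hK)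
    have := hasSum_integral_of_summable_integral_norm hI2 (by
      refine Summable.of_nonneg_of_le (fun j => integral_nonneg fun x => norm_nonneg _)
        (fun j => ?_) (sm.mul_right K)
      rw [← integral_mul_const]
      refine integral_mono (hI2 j).norm ((hI j).norm.mul_const K) fun x => ?_
      simp only [norm_mul (a j * w j x)]
      exact mul_le_mul_of_nonneg_left (hK x) (norm_nonneg _))
    simp only [tsum_mul_right] at this
    simpa only [mul_assoc, integral_const_mul] using this

theorem test_fd {φ : ℝ × ℝ → ℝ} (h : IsTest φ) (v : ℝ × ℝ) :
    IsTest (fun x => fderiv ℝ φ x v) :=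
  ⟨fd_contDiff h.1 v, h.2.fderiv_apply ℝ v⟩

theorem test_bdd {φ : ℝ × ℝ → ℝ} (h : IsTest φ) : ∃ K, ∀ x, |φ x| ≤ K :=
  h.1.continuous.bounded_above_of_compact_support h.2

abbrev E1 : Type := lp (fun _ : ℕ => ℝ) 1

theorem E1.summable (a : E1) : Summable fun j => |a j| := by
  have := (lp.memℓp a).summable (by simp)
  simpa using this

theorem E1.norm_eq (a : E1) : ‖a‖ = ∑' j, |a j| := by
  rw [lp.norm_eq_tsum_rpow (by simp)]; simp

/-- Pairing of `ℓ¹` with a bounded sequence. -/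
theorem pairing {m : ℕ → ℝ} {K : ℝ} (hm : ∀ j, |m j| ≤ K) :
    ∃ T : E1 →L[ℝ] ℝ, ∀ a : E1, T a = ∑' j, a j * m j := by
  have sb : ∀ a : E1, Summable fun j => |a j * m j| := fun a => by
    refine Summable.of_nonneg_of_le (fun j => abs_nonneg _) (fun j => ?_) (a.summable.mul_right K)
    rw [abs_mul]; exact mul_le_mul_of_nonneg_left (hm j) (abs_nonneg _)
  have sm : ∀ a : E1, Summable fun j => a j * m j := fun a => (sb a).of_abs
  refine ⟨LinearMap.mkContinuous (⟨⟨fun a => ∑' j, a j * m j, ?_⟩, ?_⟩ : E1 →ₗ[ℝ] ℝ) K ?_,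
    fun a => rfl⟩
  · intro a b
    rw [← (sm a).tsum_add (sm b)]
    congr 1; ext j
    rw [lp.coeFn_add, Pi.add_apply, add_mul]
  · intro r a
    simp only [RingHom.id_apply, smul_eq_mul]
    rw [← tsum_mul_left]
    congr 1; ext j
    rw [lp.coeFn_smul, Pi.smul_apply, smul_eq_mul, mul_assoc]
  · intro a
    change ‖∑' j, a j * m j‖ ≤ K * ‖a‖
    rw [E1.norm_eq, ← tsum_mul_left]
    have h0 : Summable fun j => ‖a j * m j‖ := by simpa only [Real.norm_eq_abs] using sb a
    refine (norm_tsum_le_tsum_norm h0).trans ?_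
    simp only [Real.norm_eq_abs]
    refine (sb a).tsum_le_tsum (fun j => ?_) (a.summable.mul_left K)
    rw [abs_mul, mul_comm]; exact mul_le_mul_of_nonneg_right (hm j) (abs_nonneg _)

theorem pd_norm {u : ℝ × ℝ → ℝ} (h1 : ∀ x, |pd1 u x| ≤ 1) (h2 : ∀ x, |pd2 u x| ≤ 1) (x : ℝ × ℝ) :
    ‖fderiv ℝ u x‖ ≤ 2 := by
  refine ContinuousLinearMap.opNorm_le_bound _ (by norm_num) fun v => ?_
  have e : v = v.1 • ((1:ℝ), (0:ℝ)) + v.2 • ((0:ℝ), (1:ℝ)) := by ext <;> simp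
  have e2 : fderiv ℝ u x v = v.1 * pd1 u x + v.2 * pd2 u x := by
    conv_lhs => rw [e]
    rw [map_add, map_smul, map_smul]; rfl
  rw [e2]
  have a1 : |v.1| ≤ ‖v‖ := norm_fst_le v
  have a2 : |v.2| ≤ ‖v‖ := norm_snd_le v
  calc |v.1 * pd1 u x + v.2 * pd2 u x| ≤ |v.1 * pd1 u x| + |v.2 * pd2 u x| := abs_add_le _ _
    _ ≤ ‖v‖ * 1 + ‖v‖ * 1 := by
        rw [abs_mul, abs_mul]
        gcongr
        · exact h1 x
        · exact h2 x
    _ = 2 * ‖v‖ := by ring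

theorem series_C1 {u : ℕ → ℝ × ℝ → ℝ} (hu : ∀ n, InT (u n)) (b0 : ∀ n x, |u n x| ≤ 1)
    (b1 : ∀ n x, |pd1 (u n) x| ≤ 1) (b2 : ∀ n x, |pd2 (u n) x| ≤ 1) {a : ℕ → ℝ}
    (ha : Summable fun j => |a j|) : ContDiff ℝ 1 fun x => ∑' j, a j * u j x := by
  have hd : ∀ j, ContDiff ℝ (⊤ : ℕ∞) fun x => a j * u j x := fun j => contDiff_const.mul (hu j).1
  have := contDiff_tsum (𝕜 := ℝ) (N := 1) (f := fun j x => a j * u j x)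
    (v := fun _ j => |a j| * 2) (fun j => (hd j).of_le (by exact_mod_cast le_top))
    (fun k _ => ha.mul_right 2) ?_
  · exact_mod_cast this
  · intro k j x hk
    have hk' : k ≤ 1 := by exact_mod_cast hk
    interval_cases k
    · rw [norm_iteratedFDeriv_zero, norm_mul, Real.norm_eq_abs, Real.norm_eq_abs]
      have := b0 j x
      gcongr; linarith
    · rw [norm_iteratedFDeriv_one, fderiv_const_mul ((hu j).diff x), norm_smul, Real.norm_eq_abs]
      have := pd_norm (b1 j) (b2 j) x
      gcongr


/-- There exists a `C¹` (in particular Lipschitz) function `f` on `ℝ²` vanishing outside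
`[-1,1]²` whose repeated distributional derivatives `∂_x² f` and `∂_y² f` are represented by
integrable functions, while the mixed distributional derivative `∂_x∂_y f` is not represented
by any integrable function. -/
theorem c1_function_with_L1_repeated_but_not_mixed_derivatives :
    ∃ f : ℝ × ℝ → ℝ, ContDiff ℝ 1 f ∧
      (∀ p : ℝ × ℝ, p ∉ Set.Icc ((-1 : ℝ), (-1 : ℝ)) (1, 1) → f p = 0) ∧
      (∃ g : ℝ × ℝ → ℝ, Integrable g ∧ ∀ φ : ℝ × ℝ → ℝ, IsTest φ →
        ∫ p, g p * φ p = ∫ p, f p * pd1 (pd1 φ) p) ∧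
      (∃ g : ℝ × ℝ → ℝ, Integrable g ∧ ∀ φ : ℝ × ℝ → ℝ, IsTest φ →
        ∫ p, g p * φ p = ∫ p, f p * pd2 (pd2 φ) p) ∧
      ¬ (∃ h : ℝ × ℝ → ℝ, Integrable h ∧ ∀ φ : ℝ × ℝ → ℝ, IsTest φ →
        ∫ p, h p * φ p = ∫ p, f p * pd1 (pd2 φ) p) := by
  obtain ⟨u, φ, C, hC, hu, hφ, bφ, b0, b1, b2, i1, i2, big⟩ := blocks
  have i0 : ∀ j, ∫ x, |u j x| ≤ 4 * 1 := fun j => int_le (b0 j) (hu j).2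
  by_contra! hcon
  have main : ∀ a : E1, ∃ h : ℝ × ℝ → ℝ, Integrable h ∧ ∀ φ : ℝ × ℝ → ℝ, IsTest φ →
      ∫ p, h p * φ p = ∑' j, a j * ∫ p, u j p * pd1 (pd2 φ) p := by
    intro a
    obtain ⟨-, s0⟩ := ser (fun j => (hu j).integrable) i0 a.summable
    obtain ⟨I1, s1⟩ := ser (fun j => (hu j).pd1.pd1.integrable) i1 a.summable
    obtain ⟨I2, s2⟩ := ser (fun j => (hu j).pd2.pd2.integrable) i2 a.summable
    have t0 : ∀ (φ : ℝ × ℝ → ℝ), IsTest φ → ∀ v w,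
        HasSum (fun j => a j * ∫ x, u j x * fderiv ℝ (fun y => fderiv ℝ φ y v) x w)
        (∫ x, (∑' j, a j * u j x) * fderiv ℝ (fun y => fderiv ℝ φ y v) x w) := by
      intro φ hφ v w
      have ht := test_fd (test_fd hφ v) w
      exact s0 _ ht.1.continuous (test_bdd ht)
    obtain ⟨h, hI, hh⟩ := hcon (fun x => ∑' j, a j * u j x) (series_C1 hu b0 b1 b2 a.summable)
      (fun p hp => by
        have : ∀ j, u j p = 0 := fun j => (hu j).2 p hp
        simp [this])
      ⟨_, I1, fun φ hφ => by
        have h : HasSum (fun j => a j * ∫ x, pd1 (pd1 (u j)) x * φ x) _ :=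
          s1 φ hφ.1.continuous (test_bdd hφ)
        have e : (fun j => a j * ∫ x, pd1 (pd1 (u j)) x * φ x) = fun j =>
            a j * ∫ x, u j x * fderiv ℝ (fun y => fderiv ℝ φ y (1, 0)) x (1, 0) :=
          funext fun j => congrArg (fun t => a j * t) (ibp2 (hu j) hφ.1 (1, 0) (1, 0)).symm
        rw [e] at h
        exact h.unique (t0 φ hφ (1, 0) (1, 0))⟩
      ⟨_, I2, fun φ hφ => by
        have h : HasSum (fun j => a j * ∫ x, pd2 (pd2 (u j)) x * φ x) _ :=
          s2 φ hφ.1.continuous (test_bdd hφ)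
        have e : (fun j => a j * ∫ x, pd2 (pd2 (u j)) x * φ x) = fun j =>
            a j * ∫ x, u j x * fderiv ℝ (fun y => fderiv ℝ φ y (0, 1)) x (0, 1) :=
          funext fun j => congrArg (fun t => a j * t) (ibp2 (hu j) hφ.1 (0, 1) (0, 1)).symm
        rw [e] at h
        exact h.unique (t0 φ hφ (0, 1) (0, 1))⟩
    exact ⟨h, hI, fun φ hφ => (hh φ hφ).trans (t0 φ hφ (0, 1) (1, 0)).tsum_eq.symm⟩
  have bd : ∀ n j, |∫ x, u j x * pd1 (pd2 (φ n)) x| ≤ ∫ x, |pd1 (pd2 (φ n)) x| := by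
    intro n j
    refine abs_integral_le_integral_abs.trans ?_
    refine integral_mono ((hu j).mul (hφ n).pd2.pd1.1).integrable.abs
      (hφ n).pd2.pd1.integrable.abs fun x => ?_
    simp only [abs_mul]
    exact mul_le_of_le_one_left (abs_nonneg _) (b0 j x)
  choose T hT using fun n => pairing (bd n)
  obtain ⟨K, hK⟩ := banach_steinhaus (g := T) (by
    intro a
    obtain ⟨h, hI, hh⟩ := main a
    refine ⟨∫ x, |h x|, fun n => ?_⟩
    rw [hT n a, ← hh (φ n) (hφ n).isTest, Real.norm_eq_abs]
    refine abs_integral_le_integral_abs.trans ?_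
    refine integral_mono (hI.mul_bdd (c := 1) (hφ n).cont.aestronglyMeasurable
      (ae_of_all _ (bφ n))).abs hI.abs fun x => ?_
    simp only [abs_mul]
    exact mul_le_of_le_one_right (abs_nonneg _) (bφ n x))
  obtain ⟨n, hn⟩ := exists_nat_gt K
  have h1 := (T n).le_opNorm (lp.single 1 n (1:ℝ))
  rw [hT n, tsum_eq_single n (fun j hj => by simp [lp.single_apply, hj]),
    lp.norm_single one_pos] at h1
  simp only [lp.single_apply_self, one_mul, norm_one, mul_one] at h1
  have h2 := (le_abs_self _).trans h1
  linarith [big n, hK n]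
end
end

section
/- There exist a probability density ϱ ∈ C^∞(ℝ²) (ϱ ≥ 0, ∫_{ℝ²} ϱ dx = 1) and a C^∞ vector field v: ℝ² → ℝ² such that |v| ∈ L¹(ℝ²), Δϱ = div v in the sense of distributions, but |∇ϱ| does not belong to L¹(ℝ²). -/
open MeasureTheory Real

noncomputable section

/-- Euclidean magnitude of a vector in `ℝ²`. -/
def emag (v : ℝ × ℝ) : ℝ := Real.sqrt (v.1 ^ 2 + v.2 ^ 2)


open Set Filter Topology

lemma contDiff_pd1 {f : ℝ × ℝ → ℝ} (hf : ContDiff ℝ (⊤ : ℕ∞) f) : ContDiff ℝ (⊤ : ℕ∞) (pd1 f) := by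
  unfold pd1
  exact (hf.fderiv_right (m := (⊤ : ℕ∞)) (by simp)).clm_apply contDiff_const

lemma contDiff_pd2 {f : ℝ × ℝ → ℝ} (hf : ContDiff ℝ (⊤ : ℕ∞) f) : ContDiff ℝ (⊤ : ℕ∞) (pd2 f) := by
  unfold pd2
  exact (hf.fderiv_right (m := (⊤ : ℕ∞)) (by simp)).clm_apply contDiff_const

lemma cs_pd1 {f : ℝ × ℝ → ℝ} (hf : HasCompactSupport f) : HasCompactSupport (pd1 f) :=
  hf.fderiv_apply (𝕜 := ℝ) _

lemma cs_pd2 {f : ℝ × ℝ → ℝ} (hf : HasCompactSupport f) : HasCompactSupport (pd2 f) :=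
  hf.fderiv_apply (𝕜 := ℝ) _

lemma diff_of_smooth {f : ℝ × ℝ → ℝ} (hf : ContDiff ℝ (⊤ : ℕ∞) f) : Differentiable ℝ f :=
  hf.differentiable (by simp)

lemma int_mul_cs {f g : ℝ × ℝ → ℝ} (hf : Continuous f) (hg : Continuous g)
    (hgc : HasCompactSupport g) : Integrable (fun p => f p * g p) :=
  (hf.mul hg).integrable_of_hasCompactSupport hgc.mul_left

lemma ibp1_s2 {f g : ℝ × ℝ → ℝ} (hf : ContDiff ℝ (⊤ : ℕ∞) f) (hg : ContDiff ℝ (⊤ : ℕ∞) g)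
    (hgc : HasCompactSupport g) : ∫ p, f p * pd1 g p = - ∫ p, pd1 f p * g p := by
  apply integral_mul_fderiv_eq_neg_fderiv_mul_of_integrable
  · exact int_mul_cs (contDiff_pd1 hf).continuous hg.continuous hgc
  · exact int_mul_cs hf.continuous (contDiff_pd1 hg).continuous (cs_pd1 hgc)
  · exact int_mul_cs hf.continuous hg.continuous hgc
  · exact fun x _ => diff_of_smooth hf x
  · exact fun x _ => diff_of_smooth hg x

lemma ibp2_s2 {f g : ℝ × ℝ → ℝ} (hf : ContDiff ℝ (⊤ : ℕ∞) f) (hg : ContDiff ℝ (⊤ : ℕ∞) g)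
    (hgc : HasCompactSupport g) : ∫ p, f p * pd2 g p = - ∫ p, pd2 f p * g p := by
  apply integral_mul_fderiv_eq_neg_fderiv_mul_of_integrable
  · exact int_mul_cs (contDiff_pd2 hf).continuous hg.continuous hgc
  · exact int_mul_cs hf.continuous (contDiff_pd2 hg).continuous (cs_pd2 hgc)
  · exact int_mul_cs hf.continuous hg.continuous hgc
  · exact fun x _ => diff_of_smooth hf x
  · exact fun x _ => diff_of_smooth hg x

lemma pd_comm {f : ℝ × ℝ → ℝ} (hf : ContDiff ℝ (⊤ : ℕ∞) f) (p : ℝ × ℝ) :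
    pd1 (pd2 f) p = pd2 (pd1 f) p := by
  have h1 : DifferentiableAt ℝ (fderiv ℝ f) p :=
    (hf.fderiv_right (m := (⊤ : ℕ∞)) (by simp)).differentiable (by simp) p
  have hs : IsSymmSndFDerivAt ℝ f p := by
    apply (hf.contDiffAt (x := p)).isSymmSndFDerivAt
    simp only [minSmoothness_of_isRCLikeNormedField]
    exact WithTop.coe_le_coe.2 (le_top : (2 : ℕ∞) ≤ ⊤)
  unfold pd1 pd2
  rw [fderiv_clm_apply h1 (differentiableAt_const _), fderiv_clm_apply h1 (differentiableAt_const _)]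
  simp
  exact hs _ _

/-- The field `∇ϱ - ∇^⊥ψ`. -/
def vf (r s : ℝ × ℝ → ℝ) (p : ℝ × ℝ) : ℝ × ℝ := (pd1 r p - pd2 s p, pd2 r p + pd1 s p)

lemma fderiv_pair (f : ℝ × ℝ → ℝ) (p v : ℝ × ℝ) :
    fderiv ℝ f p v = v.1 * pd1 f p + v.2 * pd2 f p := by
  have : v = v.1 • ((1:ℝ), (0:ℝ)) + v.2 • ((0:ℝ), (1:ℝ)) := by ext <;> simp
  conv_lhs => rw [this, map_add, map_smul, map_smul]
  simp [pd1, pd2]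

lemma vf_dist {r s φ : ℝ × ℝ → ℝ} (hr : ContDiff ℝ (⊤ : ℕ∞) r) (hs : ContDiff ℝ (⊤ : ℕ∞) s)
    (hφ : ContDiff ℝ (⊤ : ℕ∞) φ) (hc : HasCompactSupport φ) :
    ∫ p, r p * (pd1 (pd1 φ) p + pd2 (pd2 φ) p) = - ∫ p, fderiv ℝ φ p (vf r s p) := by
  have h1 := contDiff_pd1 hφ
  have h2 := contDiff_pd2 hφ
  have c1 := cs_pd1 hc
  have c2 := cs_pd2 hc
  have e1 := ibp1_s2 hr h1 c1
  have e2 := ibp2_s2 hr h2 c2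
  have e3 := ibp2_s2 hs h1 c1
  have e4 := ibp1_s2 hs h2 c2
  have e5 : ∫ p, s p * pd1 (pd2 φ) p = ∫ p, s p * pd2 (pd1 φ) p := by
    simp_rw [pd_comm hφ]
  have i1 := int_mul_cs (contDiff_pd1 hr).continuous h1.continuous c1
  have i2 := int_mul_cs (contDiff_pd2 hr).continuous h2.continuous c2
  have i3 := int_mul_cs (contDiff_pd2 hs).continuous h1.continuous c1
  have i4 := int_mul_cs (contDiff_pd1 hs).continuous h2.continuous c2
  have i5 := int_mul_cs hr.continuous (contDiff_pd1 h1).continuous (cs_pd1 c1)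
  have i6 := int_mul_cs hr.continuous (contDiff_pd2 h2).continuous (cs_pd2 c2)
  have L : ∫ p, r p * (pd1 (pd1 φ) p + pd2 (pd2 φ) p)
      = (∫ p, r p * pd1 (pd1 φ) p) + ∫ p, r p * pd2 (pd2 φ) p := by
    rw [← integral_add i5 i6]; simp_rw [mul_add]
  have R : ∫ p, fderiv ℝ φ p (vf r s p)
      = ((∫ p, pd1 r p * pd1 φ p) - ∫ p, pd2 s p * pd1 φ p)
        + ((∫ p, pd2 r p * pd2 φ p) + ∫ p, pd1 s p * pd2 φ p) := by
    have j1 : Integrable (fun p => pd1 r p * pd1 φ p - pd2 s p * pd1 φ p) := i1.sub i3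
    have j2 : Integrable (fun p => pd2 r p * pd2 φ p + pd1 s p * pd2 φ p) := i2.add i4
    rw [← integral_sub i1 i3, ← integral_add i2 i4, ← integral_add j1 j2]
    congr 1; ext p
    rw [fderiv_pair]; simp only [vf]; ring
  rw [L, R]; linarith

lemma pd1_eq {f : ℝ × ℝ → ℝ} {p : ℝ × ℝ} {d : ℝ} (hf : DifferentiableAt ℝ f p)
    (h : HasDerivAt (fun t => f (t, p.2)) d p.1) : pd1 f p = d := by
  have h2 : HasDerivAt (fun t : ℝ => (t, p.2)) ((1:ℝ), (0:ℝ)) p.1 :=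
    (hasDerivAt_id p.1).prodMk (hasDerivAt_const p.1 p.2)
  have h3 := (show HasFDerivAt f (fderiv ℝ f p) ((p.1, p.2)) from hf.hasFDerivAt).comp_hasDerivAt p.1 h2
  exact h3.unique h

lemma pd2_eq {f : ℝ × ℝ → ℝ} {p : ℝ × ℝ} {d : ℝ} (hf : DifferentiableAt ℝ f p)
    (h : HasDerivAt (fun t => f (p.1, t)) d p.2) : pd2 f p = d := by
  have h2 : HasDerivAt (fun t : ℝ => (p.1, t)) ((0:ℝ), (1:ℝ)) p.2 :=
    (hasDerivAt_const p.2 p.1).prodMk (hasDerivAt_id p.2)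
  have h3 := (show HasFDerivAt f (fderiv ℝ f p) ((p.1, p.2)) from hf.hasFDerivAt).comp_hasDerivAt p.2 h2
  exact h3.unique h

def dd (K : ℝ) (p : ℝ × ℝ) : ℝ := 1 + K ^ 2 * (4 - 2 * cos (K * p.1) - 2 * cos (K * p.2))
def al (K : ℝ) (p : ℝ × ℝ) : ℝ := K * sin (K * p.1) / dd K p
def be (K : ℝ) (p : ℝ × ℝ) : ℝ := - (K * sin (K * p.2)) / dd K p

lemma dd_ge (K : ℝ) (p : ℝ × ℝ) : 1 ≤ dd K p := by
  unfold dd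
  have : 0 ≤ K ^ 2 * (4 - 2 * cos (K * p.1) - 2 * cos (K * p.2)) := by
    apply mul_nonneg (sq_nonneg _)
    linarith [cos_le_one (K * p.1), cos_le_one (K * p.2)]
  linarith

lemma dd_ne (K : ℝ) (p : ℝ × ℝ) : dd K p ≠ 0 := by linarith [dd_ge K p]

lemma dd_smooth (K : ℝ) : ContDiff ℝ (⊤ : ℕ∞) (dd K) := by
  unfold dd; fun_prop

lemma al_smooth (K : ℝ) : ContDiff ℝ (⊤ : ℕ∞) (al K) := by
  unfold al; exact ContDiff.div (by fun_prop) (dd_smooth K) (dd_ne K)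

lemma be_smooth (K : ℝ) : ContDiff ℝ (⊤ : ℕ∞) (be K) := by
  unfold be; exact ContDiff.div (by fun_prop) (dd_smooth K) (dd_ne K)

lemma bound_aux {K s c e : ℝ} (h : s ^ 2 + c ^ 2 = 1) (he : e ≤ 1) :
    |K * s| ≤ 1 + K ^ 2 * (4 - 2 * c - 2 * e) := by
  have h1 : s ^ 2 ≤ 2 - 2 * c := by nlinarith [sq_nonneg (c - 1)]
  have h2 : K ^ 2 * s ^ 2 ≤ K ^ 2 * (2 - 2 * c) := mul_le_mul_of_nonneg_left h1 (sq_nonneg _)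
  have h3 : 0 ≤ K ^ 2 * (2 - 2 * e) := mul_nonneg (sq_nonneg _) (by linarith)
  rw [abs_le]; constructor <;> nlinarith [sq_nonneg (K * s - 1), sq_nonneg (K * s + 1)]

lemma al_abs (K : ℝ) (p : ℝ × ℝ) : |al K p| ≤ 1 := by
  unfold al
  rw [abs_div, abs_of_pos (by linarith [dd_ge K p] : 0 < dd K p)]
  rw [div_le_one (by linarith [dd_ge K p])]
  exact bound_aux (sin_sq_add_cos_sq _) (cos_le_one _)

lemma be_abs (K : ℝ) (p : ℝ × ℝ) : |be K p| ≤ 1 := by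
  unfold be
  rw [abs_div, abs_neg, abs_of_pos (by linarith [dd_ge K p] : 0 < dd K p)]
  rw [div_le_one (by linarith [dd_ge K p])]
  refine (bound_aux (sin_sq_add_cos_sq _) (cos_le_one (K * p.1))).trans ?_
  unfold dd; linarith

lemma dd_x (K : ℝ) (p : ℝ × ℝ) :
    HasDerivAt (fun t => dd K (t, p.2)) (2 * K ^ 3 * sin (K * p.1)) p.1 := by
  unfold dd
  have h := ((hasDerivAt_id p.1).const_mul K).cos
  have := ((((h.const_mul 2).const_sub 4).sub_const (2 * cos (K * p.2))).const_mul (K ^ 2)).const_add 1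
  refine this.congr_deriv ?_
  simp; ring

lemma dd_y (K : ℝ) (p : ℝ × ℝ) :
    HasDerivAt (fun t => dd K (p.1, t)) (2 * K ^ 3 * sin (K * p.2)) p.2 := by
  unfold dd
  have h := ((hasDerivAt_id p.2).const_mul K).cos
  have := (((h.const_mul 2).const_sub (4 - 2 * cos (K * p.1))).const_mul (K ^ 2)).const_add 1
  refine this.congr_deriv ?_
  simp; ring

lemma sinK (K x : ℝ) : HasDerivAt (fun t => K * sin (K * t)) (K ^ 2 * cos (K * x)) x := by
  have h := (((hasDerivAt_id x).const_mul K).sin).const_mul K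
  refine h.congr_deriv ?_
  simp; ring

lemma al_x (K : ℝ) (p : ℝ × ℝ) : pd1 (al K) p =
    (K ^ 2 * cos (K * p.1) * dd K p - K * sin (K * p.1) * (2 * K ^ 3 * sin (K * p.1))) / dd K p ^ 2 :=
  pd1_eq (diff_of_smooth (al_smooth K) p) ((sinK K p.1).div (dd_x K p) (dd_ne K p))

lemma al_y (K : ℝ) (p : ℝ × ℝ) : pd2 (al K) p =
    - (2 * K ^ 4 * (sin (K * p.1) * sin (K * p.2))) / dd K p ^ 2 := by
  rw [pd2_eq (diff_of_smooth (al_smooth K) p)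
    ((hasDerivAt_const p.2 (K * sin (K * p.1))).div (dd_y K p) (dd_ne K p))]
  congr 1; ring

lemma be_x (K : ℝ) (p : ℝ × ℝ) : pd1 (be K) p =
    (2 * K ^ 4 * (sin (K * p.1) * sin (K * p.2))) / dd K p ^ 2 := by
  rw [pd1_eq (diff_of_smooth (be_smooth K) p)
    ((hasDerivAt_const p.1 (-(K * sin (K * p.2)))).div (dd_x K p) (dd_ne K p))]
  congr 1; ring

lemma be_y (K : ℝ) (p : ℝ × ℝ) : pd2 (be K) p =
    (-(K ^ 2 * cos (K * p.2)) * dd K p + K * sin (K * p.2) * (2 * K ^ 3 * sin (K * p.2)))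
      / dd K p ^ 2 := by
  rw [pd2_eq (diff_of_smooth (be_smooth K) p) ((sinK K p.2).neg.div (dd_y K p) (dd_ne K p))]
  congr 1; simp

/-- one-dimensional factor -/
def pp (K : ℝ) (x : ℝ) : ℝ := K / (1 + K ^ 2 * (2 - 2 * cos (K * x)))

lemma pp_den (K x : ℝ) : 1 ≤ 1 + K ^ 2 * (2 - 2 * cos (K * x)) := by
  have : 0 ≤ K ^ 2 * (2 - 2 * cos (K * x)) :=
    mul_nonneg (sq_nonneg _) (by linarith [cos_le_one (K * x)])
  linarith

lemma cr1 (K : ℝ) (p : ℝ × ℝ) : pd2 (al K) p + pd1 (be K) p = 0 := by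
  rw [al_y, be_x]; ring

lemma cr2 {K : ℝ} (p : ℝ × ℝ) :
    |pd1 (al K) p - pd2 (be K) p| ≤ 2 * (pp K p.1 * pp K p.2) + 1 := by
  have hd := dd_ge K p
  have e : pd1 (al K) p - pd2 (be K) p =
     (K ^ 2 * (cos (K * p.1) + cos (K * p.2))
       - 4 * K ^ 4 * ((1 - cos (K * p.1)) * (1 - cos (K * p.2)))) / dd K p ^ 2 := by
    rw [al_x, be_y, ← sub_div]
    congr 1
    have h1 := sin_sq_add_cos_sq (K * p.1)
    have h2 := sin_sq_add_cos_sq (K * p.2)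
    unfold dd
    linear_combination (-2) * K ^ 4 * h1 - 2 * K ^ 4 * h2
  rw [e, abs_div, abs_of_pos (by positivity : 0 < dd K p ^ 2)]
  have c1 := cos_le_one (K * p.1)
  have c2 := cos_le_one (K * p.2)
  have c3 := neg_one_le_cos (K * p.1)
  have c4 := neg_one_le_cos (K * p.2)
  have a1 := pp_den K p.1
  have a2 := pp_den K p.2
  have hdd : dd K p = 1 + K ^ 2 * (2 - 2 * cos (K * p.1)) + K ^ 2 * (2 - 2 * cos (K * p.2)) := by
    unfold dd; ring
  set a := K ^ 2 * (2 - 2 * cos (K * p.1)) with ha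
  set b := K ^ 2 * (2 - 2 * cos (K * p.2)) with hb
  have hpp : pp K p.1 * pp K p.2 = K ^ 2 / ((1 + a) * (1 + b)) := by
    unfold pp; rw [← ha, ← hb, div_mul_div_comm]; ring
  have hab : 4 * K ^ 4 * ((1 - cos (K * p.1)) * (1 - cos (K * p.2))) = a * b := by
    rw [ha, hb]; ring
  rw [hab]
  have n1 : |K ^ 2 * (cos (K * p.1) + cos (K * p.2)) - a * b| ≤ 2 * K ^ 2 + a * b := by
    have : 0 ≤ a * b := mul_nonneg (by linarith) (by linarith)
    rw [abs_le]; constructor <;> nlinarith [sq_nonneg K]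
  have n2 : (1 + a) * (1 + b) ≤ dd K p ^ 2 := by
    rw [hdd]; nlinarith
  have n3 : a * b ≤ dd K p ^ 2 := by
    rw [hdd]; nlinarith
  calc _ ≤ (2 * K ^ 2 + a * b) / dd K p ^ 2 := by gcongr
    _ = 2 * K ^ 2 / dd K p ^ 2 + a * b / dd K p ^ 2 := add_div _ _ _
    _ ≤ 2 * K ^ 2 / ((1 + a) * (1 + b)) + 1 := by
        apply add_le_add
        · apply div_le_div_of_nonneg_left (by positivity) (by nlinarith) n2
        · rw [div_le_one (by positivity)]; exact n3
    _ = _ := by rw [hpp]; ring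

lemma per_int {h : ℝ → ℝ} (hc : Continuous h) (hp : Function.Periodic h (2 * π))
    (he : ∀ s, h (-s) = h s) {N : ℕ} (hN : 0 < N) (a : ℝ) :
    ∫ x in a..a + 2, h (π * N * x) = (2 / π) * ∫ s in (0:ℝ)..π, h s := by
  have hN' : (0:ℝ) < N := by exact_mod_cast hN
  have hpi := pi_pos
  have hi : ∀ t₁ t₂, IntervalIntegrable h volume t₁ t₂ := fun _ _ => hc.intervalIntegrable _ _
  have hne : π * N ≠ 0 := by positivity
  rw [intervalIntegral.integral_comp_mul_left h hne]
  have e1 : π * N * (a + 2) = π * N * a + (N : ℤ) • (2 * π) := by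
    simp; ring
  rw [e1, hp.intervalIntegral_add_zsmul_eq _ _ hi, hp.intervalIntegral_add_eq _ (-π)]
  have e2 : -π + 2 * π = π := by ring
  rw [e2, ← intervalIntegral.integral_add_adjacent_intervals (hi (-π) 0) (hi 0 π)]
  have e3 : ∫ s in (-π)..0, h s = ∫ s in (0:ℝ)..π, h s := by
    have := intervalIntegral.integral_comp_neg (a := 0) (b := π) h
    simp only [he, neg_zero] at this
    exact this.symm
  rw [e3]
  simp
  field_simp
  ring

lemma pp_int {N : ℕ} (hN : 0 < N) (a : ℝ) : ∫ x in a..a + 2, pp (π * N) x ≤ 2 := by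
  have hN' : (0:ℝ) < N := by exact_mod_cast hN
  have hpi := pi_pos
  have hK : 0 < π * N := by positivity
  have key := per_int (h := fun s => (π * N) / (1 + (π * N) ^ 2 * (2 - 2 * cos s)))
    (by
      refine Continuous.div (by fun_prop) (by fun_prop) ?_
      intro s
      have : 0 ≤ (π * N) ^ 2 * (2 - 2 * cos s) :=
        mul_nonneg (sq_nonneg _) (by linarith [cos_le_one s])
      linarith)
    (by intro s; simp only [cos_add_two_pi]) (by intro s; simp only [cos_neg]) hN a
  unfold pp
  rw [key]
  set K := π * N
  have hc : 0 < 2 * K / π := by positivity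
  have b1 : ∫ s in (0:ℝ)..π, K / (1 + K ^ 2 * (2 - 2 * cos s))
      ≤ ∫ s in (0:ℝ)..π, K * (1 + (2 * K / π * s) ^ 2)⁻¹ := by
    apply intervalIntegral.integral_mono_on hpi.le
    · apply Continuous.intervalIntegrable
      refine Continuous.div (by fun_prop) (by fun_prop) ?_
      intro s
      have : 0 ≤ K ^ 2 * (2 - 2 * cos s) :=
        mul_nonneg (sq_nonneg _) (by linarith [cos_le_one s])
      linarith
    · apply Continuous.intervalIntegrable
      refine Continuous.mul (by fun_prop) (Continuous.inv₀ (by fun_prop) ?_)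
      intro s; positivity
    · intro s hs
      rw [div_eq_mul_inv]
      have hq := cos_le_one_sub_mul_cos_sq (x := s) (by rw [abs_of_nonneg hs.1]; exact hs.2)
      gcongr
      have : (2 * K / π * s) ^ 2 = K ^ 2 * (4 / π ^ 2 * s ^ 2) := by field_simp; ring
      rw [this]
      gcongr
      have h4 : 4 / π ^ 2 * s ^ 2 = 2 * (2 / π ^ 2 * s ^ 2) := by ring
      linarith
  have b2 : ∫ s in (0:ℝ)..π, K * (1 + (2 * K / π * s) ^ 2)⁻¹ ≤ π / 2 * (π / 2) := by
    rw [intervalIntegral.integral_const_mul,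
      intervalIntegral.integral_comp_mul_left (fun s => (1 + s ^ 2)⁻¹) hc.ne', integral_inv_one_add_sq]
    have := (arctan_lt_pi_div_two (2 * K / π * π)).le
    simp only [mul_zero, arctan_zero, sub_zero, smul_eq_mul]
    calc K * ((2 * K / π)⁻¹ * arctan (2 * K / π * π)) ≤ K * ((2 * K / π)⁻¹ * (π / 2)) := by gcongr
      _ = _ := by field_simp
  calc 2 / π * ∫ s in (0:ℝ)..π, K / (1 + K ^ 2 * (2 - 2 * cos s)) ≤ 2 / π * (π / 2 * (π / 2)) := by
        gcongr; exact b1.trans b2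
    _ = π / 2 := by field_simp
    _ ≤ 2 := by linarith [pi_le_four]

lemma pp_cont (K : ℝ) : Continuous (pp K) := by
  unfold pp
  refine Continuous.div (by fun_prop) (by fun_prop) ?_
  intro s; linarith [pp_den K s]

lemma pp_int4 {N : ℕ} (hN : 0 < N) (a : ℝ) : ∫ x in Ioc (a - 2) (a + 2), pp (π * N) x ≤ 4 := by
  rw [← intervalIntegral.integral_of_le (by linarith)]
  have hi : ∀ t₁ t₂, IntervalIntegrable (pp (π * N)) volume t₁ t₂ :=
    fun _ _ => (pp_cont _).intervalIntegrable _ _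
  rw [← intervalIntegral.integral_add_adjacent_intervals (hi (a - 2) a) (hi a (a + 2))]
  have h1 := pp_int hN a
  have h2 := pp_int hN (a - 2)
  rw [sub_add_cancel] at h2
  linarith

lemma inner_int {A K : ℝ} (hA : 0 < A) :
    ∫ t in (0:ℝ)..π, 2 * K ^ 2 * |sin t| / (A + K ^ 2 * (2 - 2 * cos t)) ^ 2
      = 1 / A - 1 / (A + 4 * K ^ 2) := by
  have hpos : ∀ t, 0 < A + K ^ 2 * (2 - 2 * cos t) := fun t => by
    have : 0 ≤ K ^ 2 * (2 - 2 * cos t) := mul_nonneg (sq_nonneg _) (by linarith [cos_le_one t])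
    linarith
  have hd : ∀ t, HasDerivAt (fun t => - (A + K ^ 2 * (2 - 2 * cos t))⁻¹)
      (2 * K ^ 2 * sin t / (A + K ^ 2 * (2 - 2 * cos t)) ^ 2) t := by
    intro t
    have h := (((((hasDerivAt_cos t).const_mul 2).const_sub 2).const_mul (K ^ 2)).const_add A).inv
      (hpos t).ne'
    refine h.neg.congr_deriv ?_
    ring
  have e : ∫ t in (0:ℝ)..π, 2 * K ^ 2 * |sin t| / (A + K ^ 2 * (2 - 2 * cos t)) ^ 2
      = ∫ t in (0:ℝ)..π, 2 * K ^ 2 * sin t / (A + K ^ 2 * (2 - 2 * cos t)) ^ 2 := by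
    apply intervalIntegral.integral_congr
    intro t ht
    rw [uIcc_of_le pi_pos.le] at ht
    simp only [abs_of_nonneg (sin_nonneg_of_mem_Icc ht)]
  rw [e, intervalIntegral.integral_eq_sub_of_hasDerivAt (fun t _ => hd t)]
  · simp
    ring
  · apply Continuous.intervalIntegrable
    exact Continuous.div (by fun_prop) (by fun_prop) (fun t => (pow_pos (hpos t) 2).ne')

lemma outer_int {K : ℝ} :
    ∫ s in (0:ℝ)..π, 2 * K ^ 2 * |sin s| * (1 / (1 + K ^ 2 * (2 - 2 * cos s))
        - 1 / (1 + K ^ 2 * (2 - 2 * cos s) + 4 * K ^ 2))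
      = 2 * log (1 + 4 * K ^ 2) - log (1 + 8 * K ^ 2) := by
  have hpos : ∀ B, 0 < B → ∀ t, 0 < B + K ^ 2 * (2 - 2 * cos t) := fun B hB t => by
    have : 0 ≤ K ^ 2 * (2 - 2 * cos t) := mul_nonneg (sq_nonneg _) (by linarith [cos_le_one t])
    linarith
  have hB : 0 < 1 + 4 * K ^ 2 := by positivity
  have hd : ∀ B, 0 < B → ∀ t, HasDerivAt (fun t => log (B + K ^ 2 * (2 - 2 * cos t)))
      (2 * K ^ 2 * sin t / (B + K ^ 2 * (2 - 2 * cos t))) t := by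
    intro B hB t
    have h := (((((hasDerivAt_cos t).const_mul 2).const_sub 2).const_mul (K ^ 2)).const_add B).log
      (hpos B hB t).ne'
    refine h.congr_deriv ?_
    ring
  have e : ∫ s in (0:ℝ)..π, 2 * K ^ 2 * |sin s| * (1 / (1 + K ^ 2 * (2 - 2 * cos s))
        - 1 / (1 + K ^ 2 * (2 - 2 * cos s) + 4 * K ^ 2))
      = ∫ t in (0:ℝ)..π, (2 * K ^ 2 * sin t / (1 + K ^ 2 * (2 - 2 * cos t))
        - 2 * K ^ 2 * sin t / ((1 + 4 * K ^ 2) + K ^ 2 * (2 - 2 * cos t))) := by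
    apply intervalIntegral.integral_congr
    intro t ht
    rw [uIcc_of_le pi_pos.le] at ht
    have := hpos _ hB t
    have := hpos _ one_pos t
    simp only [abs_of_nonneg (sin_nonneg_of_mem_Icc ht)]
    rw [show 1 + K ^ 2 * (2 - 2 * cos t) + 4 * K ^ 2 = (1 + 4 * K ^ 2) + K ^ 2 * (2 - 2 * cos t) by ring]
    ring
  rw [e, intervalIntegral.integral_eq_sub_of_hasDerivAt
    (fun t _ => (hd 1 one_pos t).sub (hd _ hB t))]
  · simp
    ring_nf
  · apply Continuous.intervalIntegrable
    exact Continuous.sub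
      (Continuous.div (by fun_prop) (by fun_prop) (fun t => (hpos _ one_pos t).ne'))
      (Continuous.div (by fun_prop) (by fun_prop) (fun t => (hpos _ hB t).ne'))

lemma lower_int {N : ℕ} (hN : 0 < N) (a b : ℝ) :
    2 / π ^ 2 * log N ≤
      ∫ p in Ioo a (a + 2) ×ˢ Ioo b (b + 2), |pd2 (al (π * N)) p| := by
  have hN' : (1:ℝ) ≤ N := by exact_mod_cast hN
  have hpi := pi_pos
  have hcont : Continuous (fun p => |pd2 (al (π * N)) p|) :=
    (contDiff_pd2 (al_smooth (π * N))).continuous.abs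
  have hInt0 : IntegrableOn (fun p => |pd2 (al (π * N)) p|) (Ioo a (a + 2) ×ˢ Ioo b (b + 2))
      (volume.prod volume) := by
    apply (hcont.continuousOn.integrableOn_compact
      ((isCompact_Icc (a := a) (b := a + 2)).prod (isCompact_Icc (a := b) (b := b + 2)))).mono_set
    exact prod_mono Ioo_subset_Icc_self Ioo_subset_Icc_self
  rw [Measure.volume_eq_prod, setIntegral_prod _ hInt0]
  set K := π * N with hKdef
  have hK : 0 < K := by positivity
  have hpos : ∀ A, 0 < A → ∀ t, 0 < A + K ^ 2 * (2 - 2 * cos t) := fun A hA t => by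
    have : 0 ≤ K ^ 2 * (2 - 2 * cos t) := mul_nonneg (sq_nonneg _) (by linarith [cos_le_one t])
    linarith
  have inner : ∀ x, ∫ y in Ioo b (b + 2), |pd2 (al K) (x, y)|
      = K ^ 2 * |sin (K * x)| * ((2 / π) * (1 / (1 + K ^ 2 * (2 - 2 * cos (K * x)))
        - 1 / (1 + K ^ 2 * (2 - 2 * cos (K * x)) + 4 * K ^ 2))) := by
    intro x
    rw [← integral_Ioc_eq_integral_Ioo, ← intervalIntegral.integral_of_le (by linarith)]
    have hA := hpos 1 one_pos (K * x)
    rw [← inner_int hA, ← per_int _ _ _ hN b, ← intervalIntegral.integral_const_mul]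
    · apply intervalIntegral.integral_congr
      intro y _
      simp only [← hKdef]
      rw [al_y, abs_div, abs_neg, abs_mul, abs_mul (sin _), abs_of_pos (by positivity : 0 < 2 * K ^ 4),
        abs_of_pos (show 0 < dd K (x, y) ^ 2 from pow_pos (by linarith [dd_ge K (x, y)]) 2)]
      have : dd K (x, y) = 1 + K ^ 2 * (2 - 2 * cos (K * x)) + K ^ 2 * (2 - 2 * cos (K * y)) := by
        unfold dd; ring
      rw [this]
      ring
    · exact Continuous.div (by fun_prop) (by fun_prop) (fun t => (pow_pos (hpos _ hA t) 2).ne')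
    · intro s; simp only [cos_add_two_pi, sin_add_two_pi]
    · intro s; simp only [cos_neg, sin_neg, abs_neg]
  simp_rw [inner]
  have outer : ∫ x in Ioo a (a + 2), K ^ 2 * |sin (K * x)| *
        ((2 / π) * (1 / (1 + K ^ 2 * (2 - 2 * cos (K * x)))
        - 1 / (1 + K ^ 2 * (2 - 2 * cos (K * x)) + 4 * K ^ 2)))
      = 1 / π * ((2 / π) * (2 * log (1 + 4 * K ^ 2) - log (1 + 8 * K ^ 2))) := by
    rw [← integral_Ioc_eq_integral_Ioo, ← intervalIntegral.integral_of_le (by linarith)]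
    rw [← outer_int, ← per_int _ _ _ hN a, ← intervalIntegral.integral_const_mul]
    · apply intervalIntegral.integral_congr
      intro y _
      simp only [← hKdef]
      ring
    · refine Continuous.mul (by fun_prop) (Continuous.sub ?_ ?_)
      · exact Continuous.div (by fun_prop) (by fun_prop) (fun t => (hpos _ one_pos t).ne')
      · refine Continuous.div (by fun_prop) (by fun_prop) (fun t => ?_)
        have := hpos _ one_pos t
        positivity
    · intro s; simp only [cos_add_two_pi, sin_add_two_pi]
    · intro s; simp only [cos_neg, sin_neg, abs_neg]
  rw [outer]
  have l1 : log (1 + 8 * K ^ 2) ≤ log 2 + log (1 + 4 * K ^ 2) := by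
    rw [← log_mul (by norm_num) (by positivity)]
    apply log_le_log (by positivity); linarith
  have hKN : (N : ℝ) ≤ K := by
    rw [hKdef]; nlinarith [pi_gt_three]
  have l2 : log 2 + log N ≤ log (1 + 4 * K ^ 2) := by
    rw [← log_mul (by norm_num) (by positivity)]
    apply log_le_log (by positivity); nlinarith
  calc 2 / π ^ 2 * log N = 1 / π * ((2 / π) * log N) := by field_simp
    _ ≤ _ := by gcongr; linarith

def chi : ContDiffBump (0 : ℝ × ℝ) := ⟨1, 3 / 2, by norm_num, by norm_num⟩
def cc (k : ℕ) : ℝ × ℝ := (6 * k, 0)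
def xx (k : ℕ) (p : ℝ × ℝ) : ℝ := chi (p - cc k)
def nn (k : ℕ) : ℕ := 2 ^ (2 ^ k)
def kk (k : ℕ) : ℝ := π * (nn k : ℕ)
def ff (k : ℕ) (p : ℝ × ℝ) : ℝ := (1 / 2) ^ k * (xx k p * (1 + al (kk k) p))
def gg (k : ℕ) (p : ℝ × ℝ) : ℝ := (1 / 2) ^ k * (xx k p * be (kk k) p)
def sqr (k : ℕ) : Set (ℝ × ℝ) := Ioc (6 * (k:ℝ) - 2) (6 * k + 2) ×ˢ Ioc (0 - 2 : ℝ) (0 + 2)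

lemma nn_pos (k : ℕ) : 0 < nn k := by unfold nn; positivity

lemma chi_smooth : ContDiff ℝ (⊤ : ℕ∞) (chi : ℝ × ℝ → ℝ) := chi.contDiff

lemma xx_smooth (k : ℕ) : ContDiff ℝ (⊤ : ℕ∞) (xx k) :=
  chi_smooth.comp (contDiff_id.sub contDiff_const)

lemma xx_nonneg (k : ℕ) (p : ℝ × ℝ) : 0 ≤ xx k p := chi.nonneg
lemma xx_le_one (k : ℕ) (p : ℝ × ℝ) : xx k p ≤ 1 := chi.le_one

lemma ff_smooth (k : ℕ) : ContDiff ℝ (⊤ : ℕ∞) (ff k) :=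
  contDiff_const.mul ((xx_smooth k).mul (contDiff_const.add (al_smooth _)))

lemma gg_smooth (k : ℕ) : ContDiff ℝ (⊤ : ℕ∞) (gg k) :=
  contDiff_const.mul ((xx_smooth k).mul (be_smooth _))

lemma fderiv_xx (k : ℕ) (p : ℝ × ℝ) : fderiv ℝ (xx k) p = fderiv ℝ chi (p - cc k) := by
  unfold xx
  rw [fderiv_comp_sub]

lemma chi_bd : ∃ C : ℝ, 0 ≤ C ∧ ∀ k p, |pd1 (xx k) p| ≤ C ∧ |pd2 (xx k) p| ≤ C := by
  obtain ⟨C1, h1⟩ := (cs_pd1 chi.hasCompactSupport).exists_bound_of_continuous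
    (contDiff_pd1 chi_smooth).continuous
  obtain ⟨C2, h2⟩ := (cs_pd2 chi.hasCompactSupport).exists_bound_of_continuous
    (contDiff_pd2 chi_smooth).continuous
  refine ⟨max C1 C2, ?_, fun k p => ⟨?_, ?_⟩⟩
  · exact ((norm_nonneg _).trans (h1 0)).trans (le_max_left _ _)
  · have := h1 (p - cc k)
    unfold pd1 at *
    rw [fderiv_xx]
    exact this.trans (le_max_left _ _)
  · have := h2 (p - cc k)
    unfold pd2 at *
    rw [fderiv_xx]
    exact this.trans (le_max_right _ _)

lemma notin (k : ℕ) (p : ℝ × ℝ) (h : 3 / 2 < ‖p - cc k‖) :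
    xx k p = 0 ∧ pd1 (xx k) p = 0 ∧ pd2 (xx k) p = 0 := by
  have ht : p - cc k ∉ tsupport (chi : ℝ × ℝ → ℝ) := by
    rw [chi.tsupport_eq]
    simpa [chi] using h
  have hf : fderiv ℝ chi (p - cc k) = 0 := by
    by_contra hne
    exact ht (support_fderiv_subset ℝ hne)
  refine ⟨show chi (p - cc k) = 0 from
    image_eq_zero_of_notMem_tsupport (f := (chi : ℝ × ℝ → ℝ)) ht, ?_, ?_⟩
  · unfold pd1; rw [fderiv_xx, hf]; rfl
  · unfold pd2; rw [fderiv_xx, hf]; rfl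

lemma notin_sq (k : ℕ) (p : ℝ × ℝ) (h : p ∉ sqr k) : 3 / 2 < ‖p - cc k‖ := by
  by_contra hle
  push Not at hle
  have h1 := (norm_fst_le (p - cc k)).trans hle
  have h2 := (norm_snd_le (p - cc k)).trans hle
  simp only [cc, Prod.fst_sub, Prod.snd_sub, Real.norm_eq_abs, abs_le] at h1 h2
  apply h
  simp only [sqr, mem_prod, mem_Ioc]
  refine ⟨⟨?_, ?_⟩, ?_, ?_⟩ <;> linarith [h1.1, h1.2, h2.1, h2.2]

lemma far (k : ℕ) (p : ℝ × ℝ) (h : 2 ≤ |p.1 - 6 * k|) : xx k p = 0 := by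
  refine (notin k p ?_).1
  have h1 : |p.1 - 6 * k| ≤ ‖p - cc k‖ := norm_fst_le (p - cc k)
  linarith

lemma far_ff (k : ℕ) (p : ℝ × ℝ) (h : 2 ≤ |p.1 - 6 * k|) : ff k p = 0 := by
  simp [ff, far k p h]
lemma far_gg (k : ℕ) (p : ℝ × ℝ) (h : 2 ≤ |p.1 - 6 * k|) : gg k p = 0 := by
  simp [gg, far k p h]

section sums
variable {F : ℕ → ℝ × ℝ → ℝ}

lemma tsum_fin (hF : ∀ (k : ℕ) (p : ℝ × ℝ), 2 ≤ |p.1 - 6 * (k:ℝ)| → F k p = 0) (n : ℕ) (p : ℝ × ℝ)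
    (hp : p.1 < 6 * n - 3) : ∑' k, F k p = ∑ k ∈ Finset.range n, F k p := by
  apply tsum_eq_sum
  intro k hk
  apply hF
  have : (n : ℝ) ≤ k := by exact_mod_cast (not_lt.1 (by simpa using hk))
  rw [abs_of_nonpos (by linarith)]
  linarith

lemma tsum_fin_ev (hF : ∀ (k : ℕ) (p : ℝ × ℝ), 2 ≤ |p.1 - 6 * (k:ℝ)| → F k p = 0) (n : ℕ) (p : ℝ × ℝ)
    (hp : p.1 < 6 * n - 3) :
    (fun q => ∑' k, F k q) =ᶠ[𝓝 p] fun q => ∑ k ∈ Finset.range n, F k q := by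
  have : ∀ᶠ q : ℝ × ℝ in 𝓝 p, q.1 < 6 * n - 3 :=
    (isOpen_lt continuous_fst continuous_const).mem_nhds hp
  filter_upwards [this] with q hq using tsum_fin hF n q hq

lemma ex_n (p : ℝ × ℝ) : ∃ n : ℕ, p.1 < 6 * n - 3 := by
  obtain ⟨n, hn⟩ := exists_nat_gt (p.1 + 3)
  refine ⟨n, ?_⟩
  have : (0:ℝ) ≤ n := by positivity
  linarith

lemma tsum_smooth (hF : ∀ (k : ℕ) (p : ℝ × ℝ), 2 ≤ |p.1 - 6 * (k:ℝ)| → F k p = 0)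
    (hs : ∀ k, ContDiff ℝ (⊤ : ℕ∞) (F k)) : ContDiff ℝ (⊤ : ℕ∞) (fun q => ∑' k, F k q) := by
  rw [contDiff_iff_contDiffAt]
  intro p
  obtain ⟨n, hn⟩ := ex_n p
  refine ContDiffAt.congr_of_eventuallyEq ?_ (tsum_fin_ev hF n p hn)
  exact (ContDiff.sum fun k _ => hs k).contDiffAt

lemma tsum_fderiv (hF : ∀ (k : ℕ) (p : ℝ × ℝ), 2 ≤ |p.1 - 6 * (k:ℝ)| → F k p = 0)
    (hs : ∀ k, ContDiff ℝ (⊤ : ℕ∞) (F k)) (n : ℕ) (p : ℝ × ℝ) (hp : p.1 < 6 * n - 3) :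
    fderiv ℝ (fun q => ∑' k, F k q) p = ∑ k ∈ Finset.range n, fderiv ℝ (F k) p := by
  rw [(tsum_fin_ev hF n p hp).fderiv_eq]
  exact fderiv_fun_sum fun k _ => diff_of_smooth (hs k) p

lemma tsum_one_ev (hF : ∀ (k : ℕ) (p : ℝ × ℝ), 2 ≤ |p.1 - 6 * (k:ℝ)| → F k p = 0) (k : ℕ) (p : ℝ × ℝ)
    (h1 : 6 * k - 3 < p.1) (h2 : p.1 < 6 * k + 3) :
    (fun q => ∑' k, F k q) =ᶠ[𝓝 p] F k := by
  have a1 : ∀ᶠ q : ℝ × ℝ in 𝓝 p, q.1 < 6 * k + 3 :=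
    (isOpen_lt continuous_fst continuous_const).mem_nhds h2
  have a2 : ∀ᶠ q : ℝ × ℝ in 𝓝 p, 6 * k - 3 < q.1 :=
    (isOpen_lt continuous_const continuous_fst).mem_nhds h1
  filter_upwards [a1, a2] with q hq1 hq2
  apply tsum_eq_single
  intro j hj
  apply hF
  rcases lt_or_gt_of_ne hj with h | h
  · have : (j : ℝ) + 1 ≤ k := by exact_mod_cast h
    rw [abs_of_nonneg (by linarith)]; linarith
  · have : (k : ℝ) + 1 ≤ j := by exact_mod_cast h
    rw [abs_of_nonpos (by linarith)]; linarith

end sums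

lemma integrable_of_le_sum {w : ℝ × ℝ → ℝ} (hw : Continuous w) {B : ℕ → ℝ × ℝ → ℝ}
    (hB0 : ∀ k p, 0 ≤ B k p) (hBi : ∀ k, Integrable (B k)) {M : ℝ}
    (hM : ∀ k, ∫ p, B k p ≤ (1 / 2) ^ k * M)
    (h : ∀ p, ∃ n, |w p| ≤ ∑ k ∈ Finset.range n, B k p) : Integrable w := by
  refine ⟨hw.aestronglyMeasurable, ?_⟩
  have h1 : ∫⁻ p, ‖w p‖ₑ ≤ ∫⁻ p, ∑' k, ENNReal.ofReal (B k p) := by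
    apply lintegral_mono
    intro p
    obtain ⟨n, hn⟩ := h p
    calc ‖w p‖ₑ = ENNReal.ofReal |w p| := by rw [← Real.norm_eq_abs, ofReal_norm]
      _ ≤ ENNReal.ofReal (∑ k ∈ Finset.range n, B k p) := ENNReal.ofReal_le_ofReal hn
      _ = ∑ k ∈ Finset.range n, ENNReal.ofReal (B k p) :=
          ENNReal.ofReal_sum_of_nonneg fun k _ => hB0 k p
      _ ≤ _ := ENNReal.sum_le_tsum _
  have h2 : ∫⁻ p, ∑' k, ENNReal.ofReal (B k p) = ∑' k, ENNReal.ofReal (∫ p, B k p) := by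
    rw [lintegral_tsum fun k => (hBi k).aestronglyMeasurable.aemeasurable.ennreal_ofReal]
    congr 1; ext k
    rw [ofReal_integral_eq_lintegral_ofReal (hBi k) (Eventually.of_forall (hB0 k))]
  have hsum : Summable fun k : ℕ => (1 / 2 : ℝ) ^ k * M := summable_geometric_two.mul_right M
  have h3 : ∑' k, ENNReal.ofReal (∫ p, B k p) ≤ ∑' k : ℕ, ENNReal.ofReal ((1 / 2) ^ k * M) :=
    ENNReal.tsum_le_tsum fun k => ENNReal.ofReal_le_ofReal (hM k)
  have h4 : ∑' k : ℕ, ENNReal.ofReal ((1 / 2) ^ k * M) ≠ ⊤ := hsum.tsum_ofReal_ne_top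
  exact lt_of_le_of_lt ((h1.trans h2.le).trans h3) h4.lt_top

def bb (C : ℝ) (k : ℕ) (p : ℝ × ℝ) : ℝ :=
  (1 / 2) ^ k * (sqr k).indicator (fun p => C + 2 * (pp (kk k) p.1 * pp (kk k) p.2)) p

lemma kk_pos (k : ℕ) : 0 < kk k := by
  have := nn_pos k
  have := pi_pos
  unfold kk; positivity

lemma pp_nonneg (k : ℕ) (x : ℝ) : 0 ≤ pp (kk k) x :=
  div_nonneg (kk_pos k).le (by linarith [pp_den (kk k) x])

lemma bb_nonneg {C : ℝ} (hC : 0 ≤ C) (k : ℕ) (p : ℝ × ℝ) : 0 ≤ bb C k p := by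
  refine mul_nonneg (by positivity) (indicator_nonneg (fun p _ => ?_) p)
  have := mul_nonneg (pp_nonneg k p.1) (pp_nonneg k p.2)
  linarith

lemma sq_meas (k : ℕ) : MeasurableSet (sqr k) := measurableSet_Ioc.prod measurableSet_Ioc

lemma cont_sq {f : ℝ × ℝ → ℝ} (hf : Continuous f) (k : ℕ) : IntegrableOn f (sqr k) := by
  apply (hf.continuousOn.integrableOn_compact
    ((isCompact_Icc (a := 6 * (k:ℝ) - 2) (b := 6 * k + 2)).prod
      (isCompact_Icc (a := (0 - 2 : ℝ)) (b := 0 + 2)))).mono_set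
  exact prod_mono Ioc_subset_Icc_self Ioc_subset_Icc_self

lemma pc (k : ℕ) : Continuous (fun p : ℝ × ℝ => pp (kk k) p.1 * pp (kk k) p.2) :=
  ((pp_cont _).comp continuous_fst).mul ((pp_cont _).comp continuous_snd)

lemma bb_int (C : ℝ) (k : ℕ) : Integrable (bb C k) := by
  apply Integrable.const_mul
  rw [integrable_indicator_iff (sq_meas k)]
  exact cont_sq (continuous_const.add (continuous_const.mul (pc k))) k

lemma bb_le (C : ℝ) (k : ℕ) : ∫ p, bb C k p ≤ (1 / 2) ^ k * (16 * C + 32) := by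
  unfold bb
  have i2 : IntegrableOn (fun p : ℝ × ℝ => 2 * (pp (kk k) p.1 * pp (kk k) p.2)) (sqr k) :=
    cont_sq (continuous_const.mul (pc k)) k
  rw [integral_const_mul, integral_indicator (sq_meas k),
    integral_add (cont_sq continuous_const k) i2,
    integral_const_mul]
  have e1 : ∫ p in sqr k, C = 16 * C := by
    have := setIntegral_prod_mul (μ := volume) (ν := volume) (fun _ : ℝ => C) (fun _ : ℝ => (1:ℝ))
      (Ioc (6 * (k:ℝ) - 2) (6 * k + 2)) (Ioc (0 - 2 : ℝ) (0 + 2))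
    simp only [mul_one] at this
    unfold sqr
    rw [Measure.volume_eq_prod, this]
    simp
    norm_num
    ring_nf
  have e2 : ∫ p in sqr k, pp (kk k) p.1 * pp (kk k) p.2 ≤ 16 := by
    unfold sqr
    rw [Measure.volume_eq_prod, setIntegral_prod_mul (pp (kk k)) (pp (kk k))]
    have h1 := pp_int4 (nn_pos k) (6 * k)
    have h2 := pp_int4 (nn_pos k) 0
    have h3 : 0 ≤ ∫ x in Ioc (6 * (k:ℝ) - 2) (6 * k + 2), pp (kk k) x :=
      integral_nonneg (pp_nonneg k)
    have h4 : 0 ≤ ∫ x in Ioc (0 - 2 : ℝ) (0 + 2), pp (kk k) x := integral_nonneg (pp_nonneg k)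
    change ∫ x in Ioc (6 * (k:ℝ) - 2) (6 * k + 2), pp (kk k) x ≤ 4 at h1
    change ∫ x in Ioc (0 - 2 : ℝ) (0 + 2), pp (kk k) x ≤ 4 at h2
    nlinarith
  rw [e1]
  gcongr
  linarith

lemma bb_of_bound {C c : ℝ} {k : ℕ} {p : ℝ × ℝ} (h0 : p ∉ sqr k → c = 0)
    (h1 : c ≤ C + 2 * (pp (kk k) p.1 * pp (kk k) p.2)) : (1 / 2) ^ k * c ≤ bb C k p := by
  unfold bb
  gcongr
  by_cases hp : p ∈ sqr k
  · rw [indicator_of_mem hp]; exact h1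
  · rw [indicator_of_notMem hp, h0 hp]

lemma ff_nonneg (k : ℕ) (p : ℝ × ℝ) : 0 ≤ ff k p :=
  mul_nonneg (by positivity) (mul_nonneg (xx_nonneg k p) (by
    have := (abs_le.1 (al_abs (kk k) p)).1
    linarith))

lemma ff_bb {C : ℝ} (hC : 2 ≤ C) (k : ℕ) (p : ℝ × ℝ) : ff k p ≤ bb C k p := by
  apply bb_of_bound
  · intro h; rw [(notin k p (notin_sq k p h)).1, zero_mul]
  · have h1 := (abs_le.1 (al_abs (kk k) p))
    have := mul_nonneg (pp_nonneg k p.1) (pp_nonneg k p.2)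
    nlinarith [xx_nonneg k p, xx_le_one k p]

lemma fd_prod {X A : ℝ × ℝ → ℝ} {p v : ℝ × ℝ} (hX : DifferentiableAt ℝ X p)
    (hA : DifferentiableAt ℝ A p) (c d : ℝ) :
    fderiv ℝ (fun q => c * (X q * (d + A q))) p v
      = c * (fderiv ℝ X p v * (d + A p) + X p * fderiv ℝ A p v) := by
  have h1 : DifferentiableAt ℝ (fun q => d + A q) p := (differentiableAt_const d).add hA
  have h2 : DifferentiableAt ℝ (fun q => X q * (d + A q)) p := hX.mul h1
  rw [fderiv_const_mul h2, fderiv_fun_mul hX h1, fderiv_const_add]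
  simp
  ring

lemma vf_bb {C : ℝ} (hC : 0 ≤ C) (hb : ∀ k p, |pd1 (xx k) p| ≤ C ∧ |pd2 (xx k) p| ≤ C)
    (k : ℕ) (p : ℝ × ℝ) :
    |pd1 (ff k) p - pd2 (gg k) p| ≤ bb (3 * C + 2) k p ∧
    |pd2 (ff k) p + pd1 (gg k) p| ≤ bb (3 * C + 2) k p := by
  have hX := diff_of_smooth (xx_smooth k) p
  have hA := diff_of_smooth (al_smooth (kk k)) p
  have hB := diff_of_smooth (be_smooth (kk k)) p
  have g0 : gg k = fun q => (1 / 2) ^ k * (xx k q * (0 + be (kk k) q)) := by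
    ext q; simp [gg]
  have f1 : pd1 (ff k) p = (1 / 2) ^ k * (pd1 (xx k) p * (1 + al (kk k) p)
      + xx k p * pd1 (al (kk k)) p) := fd_prod hX hA _ _
  have f2 : pd2 (ff k) p = (1 / 2) ^ k * (pd2 (xx k) p * (1 + al (kk k) p)
      + xx k p * pd2 (al (kk k)) p) := fd_prod hX hA _ _
  have g1 : pd1 (gg k) p = (1 / 2) ^ k * (pd1 (xx k) p * (0 + be (kk k) p)
      + xx k p * pd1 (be (kk k)) p) := by rw [g0]; exact fd_prod hX hB _ _
  have g2 : pd2 (gg k) p = (1 / 2) ^ k * (pd2 (xx k) p * (0 + be (kk k) p)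
      + xx k p * pd2 (be (kk k)) p) := by rw [g0]; exact fd_prod hX hB _ _
  have e1 : pd1 (ff k) p - pd2 (gg k) p = (1 / 2) ^ k * (pd1 (xx k) p * (1 + al (kk k) p)
      - pd2 (xx k) p * be (kk k) p + xx k p * (pd1 (al (kk k)) p - pd2 (be (kk k)) p)) := by
    rw [f1, g2]; ring
  have e2 : pd2 (ff k) p + pd1 (gg k) p = (1 / 2) ^ k * (pd2 (xx k) p * (1 + al (kk k) p)
      + pd1 (xx k) p * be (kk k) p) := by
    rw [f2, g1]; linear_combination (1 / 2) ^ k * xx k p * cr1 (kk k) p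
  have hb1 := (hb k p).1
  have hb2 := (hb k p).2
  have ha : |1 + al (kk k) p| ≤ 2 := by
    have := abs_le.1 (al_abs (kk k) p)
    rw [abs_le]; constructor <;> linarith [this.1, this.2]
  have hbe := be_abs (kk k) p
  have hpp := mul_nonneg (pp_nonneg k p.1) (pp_nonneg k p.2)
  have t1 : |pd1 (xx k) p * (1 + al (kk k) p)| ≤ C * 2 := by
    rw [abs_mul]; gcongr
  have t2 : |pd2 (xx k) p * (1 + al (kk k) p)| ≤ C * 2 := by
    rw [abs_mul]; gcongr
  have t3 : |pd1 (xx k) p * be (kk k) p| ≤ C * 1 := by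
    rw [abs_mul]; gcongr
  have t4 : |pd2 (xx k) p * be (kk k) p| ≤ C * 1 := by
    rw [abs_mul]; gcongr
  have t5 : |xx k p * (pd1 (al (kk k)) p - pd2 (be (kk k)) p)|
      ≤ 1 * (2 * (pp (kk k) p.1 * pp (kk k) p.2) + 1) := by
    rw [abs_mul, abs_of_nonneg (xx_nonneg k p)]
    exact mul_le_mul (xx_le_one k p) (cr2 p) (abs_nonneg _) zero_le_one
  have hk : (0:ℝ) ≤ (1 / 2) ^ k := by positivity
  constructor
  · rw [e1, abs_mul, abs_of_nonneg hk]
    apply bb_of_bound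
    · intro h
      obtain ⟨z1, z2, z3⟩ := notin k p (notin_sq k p h)
      rw [z1, z2, z3]; simp
    · refine (abs_add_le _ _).trans ?_
      have := abs_sub (pd1 (xx k) p * (1 + al (kk k) p)) (pd2 (xx k) p * be (kk k) p)
      linarith
  · rw [e2, abs_mul, abs_of_nonneg hk]
    apply bb_of_bound
    · intro h
      obtain ⟨z1, z2, z3⟩ := notin k p (notin_sq k p h)
      rw [z2, z3]; simp
    · refine (abs_add_le _ _).trans ?_
      linarith

def rho0 (p : ℝ × ℝ) : ℝ := ∑' k, ff k p
def psi0 (p : ℝ × ℝ) : ℝ := ∑' k, gg k p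

lemma rho0_smooth : ContDiff ℝ (⊤ : ℕ∞) rho0 := tsum_smooth far_ff ff_smooth
lemma psi0_smooth : ContDiff ℝ (⊤ : ℕ∞) psi0 := tsum_smooth far_gg gg_smooth

lemma rho0_nonneg (p : ℝ × ℝ) : 0 ≤ rho0 p := tsum_nonneg fun k => ff_nonneg k p

lemma rho0_int : Integrable rho0 := by
  refine integrable_of_le_sum rho0_smooth.continuous (B := bb 2) (M := 16 * 2 + 32)
    (bb_nonneg (by norm_num)) (bb_int 2) (bb_le 2) ?_
  intro p
  obtain ⟨n, hn⟩ := ex_n p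
  refine ⟨n, ?_⟩
  rw [abs_of_nonneg (rho0_nonneg p)]
  unfold rho0
  rw [tsum_fin far_ff n p hn]
  exact Finset.sum_le_sum fun k _ => ff_bb le_rfl k p

lemma rho0_zero : rho0 0 = 1 := by
  have h := (tsum_one_ev far_ff 0 0 (by simp) (by simp)).self_of_nhds
  have h1 : chi (0 : ℝ × ℝ) = 1 := chi.one_of_mem_closedBall (by simp [chi])
  have h2 : cc 0 = 0 := by simp [cc]
  change rho0 0 = ff 0 0 at h
  rw [h]
  simp [ff, xx, al, h2, h1]

lemma rho0_pos : 0 < ∫ p, rho0 p := by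
  rw [integral_pos_iff_support_of_nonneg rho0_nonneg rho0_int]
  exact (rho0_smooth.continuous.isOpen_support).measure_pos volume ⟨0, by simp [rho0_zero]⟩

lemma v_le {C : ℝ} (hC : 0 ≤ C) (hb : ∀ k p, |pd1 (xx k) p| ≤ C ∧ |pd2 (xx k) p| ≤ C)
    (p : ℝ × ℝ) : ∃ n, |pd1 rho0 p - pd2 psi0 p| ≤ ∑ k ∈ Finset.range n, bb (3 * C + 2) k p ∧
      |pd2 rho0 p + pd1 psi0 p| ≤ ∑ k ∈ Finset.range n, bb (3 * C + 2) k p := by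
  obtain ⟨n, hn⟩ := ex_n p
  have h1 : fderiv ℝ rho0 p = _ := tsum_fderiv far_ff ff_smooth n p hn
  have h2 : fderiv ℝ psi0 p = _ := tsum_fderiv far_gg gg_smooth n p hn
  refine ⟨n, ?_, ?_⟩
  · have : pd1 rho0 p - pd2 psi0 p = ∑ k ∈ Finset.range n, (pd1 (ff k) p - pd2 (gg k) p) := by
      unfold pd1 pd2
      rw [h1, h2, Finset.sum_sub_distrib]
      simp
    rw [this]
    exact (Finset.abs_sum_le_sum_abs _ _).trans
      (Finset.sum_le_sum fun k _ => (vf_bb hC hb k p).1)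
  · have : pd2 rho0 p + pd1 psi0 p = ∑ k ∈ Finset.range n, (pd2 (ff k) p + pd1 (gg k) p) := by
      unfold pd1 pd2
      rw [h1, h2, Finset.sum_add_distrib]
      simp
    rw [this]
    exact (Finset.abs_sum_le_sum_abs _ _).trans
      (Finset.sum_le_sum fun k _ => (vf_bb hC hb k p).2)

lemma v_int : Integrable (fun p => pd1 rho0 p - pd2 psi0 p) ∧
    Integrable (fun p => pd2 rho0 p + pd1 psi0 p) := by
  obtain ⟨C, hC, hb⟩ := chi_bd
  have hC' : 0 ≤ 3 * C + 2 := by linarith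
  constructor
  · refine integrable_of_le_sum ((contDiff_pd1 rho0_smooth).continuous.sub
      (contDiff_pd2 psi0_smooth).continuous) (bb_nonneg hC') (bb_int _) (bb_le _) ?_
    intro p
    obtain ⟨n, h, _⟩ := v_le hC hb p
    exact ⟨n, h⟩
  · refine integrable_of_le_sum ((contDiff_pd2 rho0_smooth).continuous.add
      (contDiff_pd1 psi0_smooth).continuous) (bb_nonneg hC') (bb_int _) (bb_le _) ?_
    intro p
    obtain ⟨n, _, h⟩ := v_le hC hb p
    exact ⟨n, h⟩

def ss (k : ℕ) : Set (ℝ × ℝ) :=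
  Ioo (6 * (k:ℝ) - 1) (6 * (k:ℝ) - 1 + 2) ×ˢ Ioo (-1 : ℝ) (-1 + 2)

lemma pd2_ss {k : ℕ} {p : ℝ × ℝ} (hp : p ∈ ss k) :
    pd2 rho0 p = (1 / 2) ^ k * pd2 (al (kk k)) p := by
  obtain ⟨⟨h1, h2⟩, h3, h4⟩ := hp
  have e1 : rho0 =ᶠ[𝓝 p] ff k := tsum_one_ev far_ff k p (by linarith) (by linarith)
  have hball : p - cc k ∈ Metric.ball (0 : ℝ × ℝ) 1 := by
    rw [mem_ball_zero_iff, Prod.norm_def, max_lt_iff]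
    simp only [cc, Prod.fst_sub, Prod.snd_sub, Real.norm_eq_abs, abs_lt]
    refine ⟨⟨?_, ?_⟩, ?_, ?_⟩ <;> linarith
  have e2 : (xx k) =ᶠ[𝓝 p] fun _ => 1 := by
    have h : (chi : ℝ × ℝ → ℝ) =ᶠ[𝓝 (p - cc k)] 1 := chi.eventuallyEq_one_of_mem_ball hball
    have ht : Tendsto (fun q : ℝ × ℝ => q - cc k) (𝓝 p) (𝓝 (p - cc k)) :=
      (continuous_id.sub continuous_const).tendsto p
    exact ht.eventually h
  have e3 : rho0 =ᶠ[𝓝 p] fun q => (1 / 2) ^ k * (1 + al (kk k) q) := by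
    filter_upwards [e1, e2] with q hq1 hq2
    rw [hq1, ff, hq2, one_mul]
  have hA := diff_of_smooth (al_smooth (kk k)) p
  have hA' : DifferentiableAt ℝ (fun q => 1 + al (kk k) q) p := (differentiableAt_const 1).add hA
  unfold pd2
  rw [e3.fderiv_eq, fderiv_const_mul hA', fderiv_const_add]
  simp

lemma ss_meas (k : ℕ) : MeasurableSet (ss k) := measurableSet_Ioo.prod measurableSet_Ioo

lemma ss_disj : Pairwise (Function.onFun Disjoint ss) := by
  intro i j hij
  rw [Function.onFun, Set.disjoint_left]
  rintro p ⟨⟨h1, h2⟩, _⟩ ⟨⟨h3, h4⟩, _⟩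
  rcases lt_or_gt_of_ne hij with h | h
  · have : (i : ℝ) + 1 ≤ j := by exact_mod_cast h
    linarith
  · have : (j : ℝ) + 1 ≤ i := by exact_mod_cast h
    linarith

lemma ss_int (k : ℕ) : 2 / π ^ 2 * log 2 ≤ ∫ p in ss k, |pd2 rho0 p| := by
  have h := lower_int (nn_pos k) (6 * (k:ℝ) - 1) (-1)
  have e : ∫ p in ss k, |pd2 rho0 p| = (1 / 2) ^ k * ∫ p in ss k, |pd2 (al (π * nn k)) p| := by
    rw [← integral_const_mul]
    apply setIntegral_congr_fun (ss_meas k)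
    intro p hp
    simp only
    rw [pd2_ss hp, abs_mul, abs_of_nonneg (by positivity : (0:ℝ) ≤ (1 / 2) ^ k)]
    rfl
  rw [e]
  have hl : log (nn k : ℝ) = 2 ^ k * log 2 := by
    unfold nn; push_cast; rw [log_pow]; push_cast; rfl
  rw [hl] at h
  calc 2 / π ^ 2 * log 2 = (1 / 2) ^ k * (2 / π ^ 2 * (2 ^ k * log 2)) := by
        have : (1 / 2 : ℝ) ^ k * 2 ^ k = 1 := by rw [← mul_pow]; norm_num
        linear_combination (-(2 / π ^ 2 * log 2)) * this
    _ ≤ _ := mul_le_mul_of_nonneg_left h (by positivity)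

lemma pd2_not_int : ¬ Integrable (pd2 rho0) := by
  intro h
  have h1 := hasSum_integral_iUnion ss_meas ss_disj (h.abs.integrableOn (s := ⋃ k, ss k))
  have h2 := h1.summable.tendsto_atTop_zero
  have h3 := ge_of_tendsto' h2 ss_int
  have : 0 < 2 / π ^ 2 * log 2 := by
    have := pi_pos
    have := log_pos (by norm_num : (1:ℝ) < 2)
    positivity
  linarith

lemma pd1_cm (c : ℝ) {f : ℝ × ℝ → ℝ} (hf : ContDiff ℝ (⊤ : ℕ∞) f) (p : ℝ × ℝ) :
    pd1 (fun q => c * f q) p = c * pd1 f p := by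
  unfold pd1
  rw [fderiv_const_mul (diff_of_smooth hf p)]; simp

lemma pd2_cm (c : ℝ) {f : ℝ × ℝ → ℝ} (hf : ContDiff ℝ (⊤ : ℕ∞) f) (p : ℝ × ℝ) :
    pd2 (fun q => c * f q) p = c * pd2 f p := by
  unfold pd2
  rw [fderiv_const_mul (diff_of_smooth hf p)]; simp

lemma emag_cont : Continuous emag := by unfold emag; fun_prop

lemma emag_le (v : ℝ × ℝ) : emag v ≤ |v.1| + |v.2| := by
  unfold emag
  rw [Real.sqrt_le_left (by positivity)]
  nlinarith [sq_abs v.1, sq_abs v.2, mul_nonneg (abs_nonneg v.1) (abs_nonneg v.2)]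

lemma le_emag (v : ℝ × ℝ) : |v.2| ≤ emag v := by
  unfold emag
  exact Real.abs_le_sqrt (by nlinarith [sq_nonneg v.1])

/-- There exist a probability density `ϱ ∈ C^∞(ℝ²)` and a `C^∞` vector field `v : ℝ² → ℝ²`
such that `|v| ∈ L¹(ℝ²)` and `Δϱ = div v` in the sense of distributions
(`∫ ϱ Δφ = -∫ ⟨v, ∇φ⟩` for all test functions `φ`), but `|∇ϱ| ∉ L¹(ℝ²)`. -/
theorem smooth_density_laplace_eq_div_not_W11 :
    ∃ (ϱ : ℝ × ℝ → ℝ) (v : ℝ × ℝ → ℝ × ℝ),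
      ContDiff ℝ (⊤ : ℕ∞) ϱ ∧ (∀ p, 0 ≤ ϱ p) ∧ (∫ p, ϱ p = 1) ∧
      ContDiff ℝ (⊤ : ℕ∞) v ∧
      Integrable (fun p => emag (v p)) ∧
      (∀ φ : ℝ × ℝ → ℝ, IsTest φ →
        ∫ p, ϱ p * (pd1 (pd1 φ) p + pd2 (pd2 φ) p) = - ∫ p, fderiv ℝ φ p (v p)) ∧
      ¬ Integrable (fun p => emag (pd1 ϱ p, pd2 ϱ p)) := by
  have hZ := rho0_pos
  set Z := ∫ p, rho0 p with hZd
  have hr : ContDiff ℝ (⊤ : ℕ∞) (fun q => Z⁻¹ * rho0 q) := contDiff_const.mul rho0_smooth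
  have hs : ContDiff ℝ (⊤ : ℕ∞) (fun q => Z⁻¹ * psi0 q) := contDiff_const.mul psi0_smooth
  have hv : ContDiff ℝ (⊤ : ℕ∞) (vf (fun q => Z⁻¹ * rho0 q) (fun q => Z⁻¹ * psi0 q)) :=
    ((contDiff_pd1 hr).sub (contDiff_pd2 hs)).prodMk ((contDiff_pd2 hr).add (contDiff_pd1 hs))
  refine ⟨fun q => Z⁻¹ * rho0 q, vf (fun q => Z⁻¹ * rho0 q) (fun q => Z⁻¹ * psi0 q), hr, ?_, ?_,
    hv, ?_, ?_, ?_⟩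
  · exact fun p => mul_nonneg (inv_nonneg.2 hZ.le) (rho0_nonneg p)
  · rw [integral_const_mul, ← hZd, inv_mul_cancel₀ hZ.ne']
  · refine (((v_int.1.const_mul Z⁻¹).abs).add ((v_int.2.const_mul Z⁻¹).abs)).mono'
      (emag_cont.comp hv.continuous).aestronglyMeasurable (Eventually.of_forall fun p => ?_)
    have h0 : 0 ≤ emag (vf (fun q => Z⁻¹ * rho0 q) (fun q => Z⁻¹ * psi0 q) p) :=
      Real.sqrt_nonneg _
    rw [Real.norm_eq_abs, abs_of_nonneg h0]
    refine (emag_le _).trans (le_of_eq ?_)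
    simp only [vf, pd1_cm _ rho0_smooth, pd2_cm _ rho0_smooth, pd1_cm _ psi0_smooth,
      pd2_cm _ psi0_smooth, ← mul_sub, ← mul_add, Pi.add_apply]
  · exact fun φ hφ => vf_dist hr hs hφ.1 hφ.2
  · intro h
    apply pd2_not_int
    have h1 : Integrable (fun p => Z⁻¹ * pd2 rho0 p) := by
      refine h.mono' (continuous_const.mul (contDiff_pd2 rho0_smooth).continuous).aestronglyMeasurable
        (Eventually.of_forall fun p => ?_)
      rw [← pd2_cm _ rho0_smooth]
      exact le_emag (pd1 (fun q => Z⁻¹ * rho0 q) p, pd2 (fun q => Z⁻¹ * rho0 q) p)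
    have h2 := h1.const_mul Z
    refine h2.congr (Eventually.of_forall fun p => ?_)
    simp only
    rw [← mul_assoc, mul_inv_cancel₀ hZ.ne', one_mul]
end
end
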